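/- arXiv:0712.2940 — 2 statements merged into one kernel-verified Lean document; each statement's English description precedes it below -/
import Mathlib

section
/- Suppose ν ≥ 1 is an integer. If h : (−ν,∞) → ℝ is twice differentiable with bounded first and second derivatives and satisfies |h(x)| ≤ c·exp(a x) for every x > −ν, for some c > 0 and a < 1/2, then the Gamma Stein equation 2(x+ν) f'(x) − x f(x) = h(x) − E[h(F(ν))], x ∈ (−ν,∞), has a solution f which is bounded on (−ν,∞), differentiable, and such that ‖f‖_∞ ≤ √(2π/ν) ‖h‖_∞ and ‖f'‖_∞ ≤ √(2π/ν) ‖h'‖_∞. -/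
open MeasureTheory ProbabilityTheory Real Set

/-- The law of the centered Gamma random variable `F(ν) = 2G(ν/2) − ν`, where `G(ν/2)` has the
Gamma distribution with shape `ν/2` and rate `1`. -/
noncomputable def centeredGammaLaw (ν : ℝ) : Measure ℝ :=
  (gammaMeasure (ν / 2) 1).map (fun x => 2 * x - ν)

/-!
The solution is `f = F / q`, where `q x = 2 (x + ν) ρ x` is the integrating factor (`ρ` the density
of `F(ν)`) and `F' = (h - E h) ρ`. Let `Φ` be the distribution function, `B x = E (x - F(ν))⁺` and
`A x = E (F(ν) - x)⁺`, so that `Φ A + (1 - Φ) B = q`. Then `F` is a convex combination, with weights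
`1 - Φ` and `Φ`, of functions bounded by `‖h‖ Φ` and `‖h‖ (1 - Φ)`; and `2 (x + ν) q f'` is the
combination, with coefficients `A` and `B`, of functions bounded by `‖h'‖ B` and `‖h'‖ A`. The two
estimates reduce to `2 c Φ (1 - Φ) ≤ q` and `c A B ≤ (x + ν) q` with `c = (2π / ν)^(-1/2)`.

Each of these inequalities is a weighted sum of two one-sided ones, whose coefficients are affine in
`x` with opposite slopes: `(1 + 4c - x) Φ ≤ 4 q` and `(x - 1 + 4c) (1 - Φ) ≤ 4 q` for the first,
`(7 + 4c - x) B ≤ 8 (x + ν) Φ` and `(x - 7 + 4c) A ≤ 8 (x + ν) (1 - Φ)` for the second. In each pair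
the two inequalities compare `Φ` with the same rational multiple of `q`, up to the sign of `c`, from
either end of `(-ν, ∞)`: the derivative of the difference has the sign of a quadratic in `x`, which
is nonnegative as soon as `16 c² ≤ 3 (2ν - 1)`.
-/

open Filter Topology

section Comparison

variable {u u' v v' : ℝ → ℝ} {a b l : ℝ}

theorem le_of_tendsto_nhdsGT_of_deriv_nonneg (hab : a < b)
    (hu : ∀ x ∈ Ioc a b, HasDerivAt u (u' x) x) (hu' : ∀ x ∈ Ioc a b, 0 ≤ u' x)
    (hlim : Tendsto u (𝓝[>] a) (𝓝 l)) : l ≤ u b := by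
  have hmono : MonotoneOn u (Ioc a b) :=
    monotoneOn_of_hasDerivWithinAt_nonneg (convex_Ioc a b) (HasDerivAt.continuousOn hu)
      (fun x hx ↦ (hu x (interior_subset hx)).hasDerivWithinAt)
      (fun x hx ↦ hu' x (interior_subset hx))
  refine le_of_tendsto hlim ?_
  filter_upwards [Ioc_mem_nhdsGT hab] with x hx
  exact hmono hx (right_mem_Ioc.mpr hab) hx.2

theorem le_of_tendsto_atTop_of_deriv_nonneg
    (hu : ∀ x ∈ Ici a, HasDerivAt u (u' x) x) (hu' : ∀ x ∈ Ici a, 0 ≤ u' x)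
    (hlim : Tendsto u atTop (𝓝 l)) : u a ≤ l := by
  have hmono : MonotoneOn u (Ici a) :=
    monotoneOn_of_hasDerivWithinAt_nonneg (convex_Ici a) (HasDerivAt.continuousOn hu)
      (fun x hx ↦ (hu x (interior_subset hx)).hasDerivWithinAt)
      (fun x hx ↦ hu' x (interior_subset hx))
  refine ge_of_tendsto hlim ?_
  filter_upwards [Ici_mem_atTop a] with x hx
  exact hmono self_mem_Ici hx hx

theorem abs_le_of_abs_deriv_le_of_tendsto_nhdsGT (hab : a < b)
    (hu : ∀ x ∈ Ioc a b, HasDerivAt u (u' x) x) (hv : ∀ x ∈ Ioc a b, HasDerivAt v (v' x) x)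
    (huv : ∀ x ∈ Ioc a b, |u' x| ≤ v' x)
    (hu0 : Tendsto u (𝓝[>] a) (𝓝 0)) (hv0 : Tendsto v (𝓝[>] a) (𝓝 0)) : |u b| ≤ v b := by
  have hadd : 0 + 0 ≤ (v + u) b :=
    le_of_tendsto_nhdsGT_of_deriv_nonneg hab (fun x hx ↦ (hv x hx).add (hu x hx))
      (fun x hx ↦ by linarith [neg_le_of_abs_le (huv x hx)]) (hv0.add hu0)
  have hsub : 0 - 0 ≤ (v - u) b :=
    le_of_tendsto_nhdsGT_of_deriv_nonneg hab (fun x hx ↦ (hv x hx).sub (hu x hx))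
      (fun x hx ↦ by linarith [le_of_abs_le (huv x hx)]) (hv0.sub hu0)
  simp only [Pi.add_apply, Pi.sub_apply] at hadd hsub
  exact abs_le.mpr ⟨by linarith, by linarith⟩

theorem abs_le_of_abs_deriv_le_of_tendsto_atTop
    (hu : ∀ x ∈ Ici a, HasDerivAt u (u' x) x) (hv : ∀ x ∈ Ici a, HasDerivAt v (-v' x) x)
    (huv : ∀ x ∈ Ici a, |u' x| ≤ v' x)
    (hu0 : Tendsto u atTop (𝓝 0)) (hv0 : Tendsto v atTop (𝓝 0)) : |u a| ≤ v a := by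
  have hadd : (u - v) a ≤ 0 - 0 :=
    le_of_tendsto_atTop_of_deriv_nonneg (fun x hx ↦ (hu x hx).sub (hv x hx))
      (fun x hx ↦ by linarith [neg_le_of_abs_le (huv x hx)]) (hu0.sub hv0)
  have hsub : (-u - v) a ≤ -0 - 0 :=
    le_of_tendsto_atTop_of_deriv_nonneg (fun x hx ↦ (hu x hx).neg.sub (hv x hx))
      (fun x hx ↦ by linarith [le_of_abs_le (huv x hx)]) (hu0.neg.sub hv0)
  simp only [Pi.sub_apply, Pi.neg_apply] at hadd hsub
  exact abs_le.mpr ⟨by linarith, by linarith⟩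

end Comparison

section Primitive

variable {g : ℝ → ℝ} {a x : ℝ}

theorem hasDerivAt_integral_of_integrableOn_Ioi (hg : IntegrableOn g (Ioi a))
    (hc : ContinuousOn g (Ioi a)) (hx : a < x) :
    HasDerivAt (fun t ↦ ∫ y in a..t, g y) (g x) x := by
  have hint : IntervalIntegrable g volume a x :=
    (intervalIntegrable_iff_integrableOn_Ioc_of_le hx.le).mpr (hg.mono_set Ioc_subset_Ioi_self)
  exact intervalIntegral.integral_hasDerivAt_right hint
    (hc.stronglyMeasurableAtFilter isOpen_Ioi x hx) (hc.continuousAt (Ioi_mem_nhds hx))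

theorem tendsto_integral_nhdsGT_zero (hg : IntegrableOn g (Ioi a)) :
    Tendsto (fun t ↦ ∫ y in a..t, g y) (𝓝[>] a) (𝓝 0) := by
  have hint : IntervalIntegrable g volume a (a + 1) :=
    (intervalIntegrable_iff_integrableOn_Ioc_of_le (by linarith)).mpr
      (hg.mono_set Ioc_subset_Ioi_self)
  have hcont := intervalIntegral.continuousOn_primitive_interval' hint left_mem_uIcc a left_mem_uIcc
  rw [ContinuousWithinAt, intervalIntegral.integral_same, uIcc_of_le (by linarith)] at hcont
  exact hcont.mono_left (nhdsWithin_le_of_mem (Icc_mem_nhdsGT (by linarith)))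

end Primitive

section GammaPDFReal

variable {a r : ℝ}

theorem integrable_gammaPDFReal (ha : 0 < a) (hr : 0 < r) : Integrable (gammaPDFReal a r) := by
  rw [← lintegral_ofReal_ne_top_iff_integrable
    (measurable_gammaPDFReal a r).aestronglyMeasurable (ae_of_all _ (gammaPDFReal_nonneg ha hr))]
  exact (lintegral_gammaPDF_eq_one ha hr).trans_ne ENNReal.one_ne_top

theorem hasDerivAt_gammaPDFReal {x : ℝ} (hx : 0 < x) :
    HasDerivAt (gammaPDFReal a r) (((a - 1) / x - r) * gammaPDFReal a r x) x := by
  have hpow : HasDerivAt (fun y : ℝ ↦ y ^ (a - 1)) ((a - 1) * x ^ (a - 1 - 1)) x :=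
    Real.hasDerivAt_rpow_const (Or.inl hx.ne')
  have hexp : HasDerivAt (fun y ↦ exp (-(r * y))) (exp (-(r * x)) * -(r * 1)) x :=
    ((hasDerivAt_id x).const_mul r).neg.exp
  have hprod := (hpow.const_mul (r ^ a / Gamma a)).mul hexp
  refine (hprod.congr_of_eventuallyEq ?_).congr_deriv ?_
  · filter_upwards [Ioi_mem_nhds hx] with y hy
    simp [gammaPDFReal, (mem_Ioi.mp hy).le]
  · rw [gammaPDFReal, if_pos hx.le, rpow_sub_one hx.ne']
    ring

theorem mul_gammaPDFReal (ha : 0 < a) (hr : 0 < r) (x : ℝ) :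
    x * gammaPDFReal a r x = a / r * gammaPDFReal (a + 1) r x := by
  rcases lt_trichotomy x 0 with hx | rfl | hx
  · simp [gammaPDFReal, hx.not_ge]
  · simp [gammaPDFReal, ha.ne']
  · have := Gamma_pos_of_pos ha
    simp only [gammaPDFReal, if_pos hx.le, Gamma_add_one ha.ne', rpow_add_one hr.ne',
      rpow_sub_one hx.ne', add_sub_cancel_right]
    field_simp

theorem gammaPDFReal_mul_rate {c : ℝ} (hc : 0 < c) (hr : 0 ≤ r) (x : ℝ) :
    gammaPDFReal a (r * c) x = c * gammaPDFReal a r (c * x) := by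
  rcases lt_or_ge x 0 with hx | hx
  · simp [gammaPDFReal, hx.not_ge, (mul_neg_of_pos_of_neg hc hx).not_ge]
  · simp only [gammaPDFReal, if_pos hx, if_pos (mul_nonneg hc.le hx), mul_rpow hr hc.le,
      mul_rpow hc.le hx, rpow_sub_one hc.ne', mul_assoc]
    field_simp

theorem tendsto_gammaPDFReal_nhdsGT_zero (ha : 1 < a) :
    Tendsto (gammaPDFReal a r) (𝓝[>] 0) (𝓝 0) := by
  have hcont : ContinuousAt (fun x ↦ r ^ a / Gamma a * x ^ (a - 1) * exp (-(r * x))) 0 :=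
    (continuousAt_const.mul (continuousAt_rpow_const _ _ (Or.inr (by linarith)))).mul (by fun_prop)
  have hlim := hcont.tendsto.mono_left (nhdsWithin_le_nhds (s := Ioi 0))
  rw [zero_rpow (by linarith), mul_zero, zero_mul] at hlim
  refine hlim.congr' ?_
  filter_upwards [self_mem_nhdsWithin] with x hx
  rw [gammaPDFReal, if_pos (mem_Ioi.mp hx).le]

theorem tendsto_gammaPDFReal_atTop (hr : 0 < r) : Tendsto (gammaPDFReal a r) atTop (𝓝 0) := by
  have hlim := (tendsto_rpow_mul_exp_neg_mul_atTop_nhds_zero (a - 1) r hr).const_mul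
    (r ^ a / Gamma a)
  rw [mul_zero] at hlim
  refine hlim.congr' ?_
  filter_upwards [eventually_ge_atTop 0] with x hx
  rw [gammaPDFReal, if_pos hx, neg_mul, mul_assoc]

theorem integral_gammaMeasure (ha : 0 < a) (hr : 0 < r) (g : ℝ → ℝ) :
    ∫ x, g x ∂(gammaMeasure a r) = ∫ x, gammaPDFReal a r x * g x := by
  have hmeas : Measurable (gammaPDF a r) := (measurable_gammaPDFReal a r).ennreal_ofReal
  rw [gammaMeasure, integral_withDensity_eq_integral_toReal_smul hmeas
    (ae_of_all _ fun _ ↦ ENNReal.ofReal_lt_top)]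
  simp only [gammaPDF, ENNReal.toReal_ofReal (gammaPDFReal_nonneg ha hr _), smul_eq_mul]

end GammaPDFReal

section CDF

variable (μ : Measure ℝ)

theorem tendsto_one_sub_cdf_atTop :
    Tendsto (fun x ↦ 1 - cdf μ x) atTop (𝓝 0) := by
  simpa using (tendsto_cdf_atTop μ).const_sub 1

theorem one_sub_cdf_nonneg (x : ℝ) : 0 ≤ 1 - cdf μ x :=
  sub_nonneg.mpr (cdf_le_one μ x)

end CDF

/-- The density of the centered Gamma law `F(ν)`: since `F(ν) + ν` is twice a `Gamma(ν/2, 1)`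
variable, it is a shifted Gamma density of rate `1/2`. -/
noncomputable def centeredGammaPDF (ν x : ℝ) : ℝ :=
  gammaPDFReal (ν / 2) (1 / 2) (x + ν)

/-- The density of `F(ν)` times its Stein kernel `2 (x + ν)`; this is the integrating factor of the
Gamma Stein equation. -/
noncomputable def steinWeight (ν x : ℝ) : ℝ :=
  2 * (x + ν) * centeredGammaPDF ν x

/-- The lower partial moment `E (x - F(ν))⁺`, in the closed form obtained by integrating by
parts. -/
noncomputable def lowerPartialMoment (ν x : ℝ) : ℝ :=
  steinWeight ν x + x * cdf (centeredGammaLaw ν) x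

/-- The upper partial moment `E (F(ν) - x)⁺`, in the closed form obtained by integrating by
parts. -/
noncomputable def upperPartialMoment (ν x : ℝ) : ℝ :=
  steinWeight ν x - x * (1 - cdf (centeredGammaLaw ν) x)

section CenteredGamma

variable {ν x : ℝ}

local notation "ρ" => centeredGammaPDF ν
local notation "q" => steinWeight ν
local notation "Φ" => cdf (centeredGammaLaw ν)

theorem centeredGammaPDF_pos (hν : 0 < ν) (hx : -ν < x) : 0 < ρ x :=
  gammaPDFReal_pos (by positivity) (by positivity) (by linarith)

theorem centeredGammaPDF_of_lt (hx : x < -ν) : ρ x = 0 :=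
  if_neg (by linarith)

theorem integrable_centeredGammaPDF (hν : 0 < ν) : Integrable ρ :=
  (integrable_gammaPDFReal (by positivity) (by positivity)).comp_add_right ν

theorem continuousOn_centeredGammaPDF : ContinuousOn ρ (Ioi (-ν)) := fun x hx ↦
  ((hasDerivAt_gammaPDFReal (neg_lt_iff_pos_add.mp hx)).comp_add_const
    x ν).continuousAt.continuousWithinAt

theorem steinWeight_pos (hν : 0 < ν) (hx : -ν < x) : 0 < q x :=
  mul_pos (by linarith) (centeredGammaPDF_pos hν hx)

theorem steinWeight_eq_gammaPDFReal (hν : 0 < ν) (x : ℝ) :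
    q x = 2 * ν * gammaPDFReal (ν / 2 + 1) (1 / 2) (x + ν) := by
  rw [steinWeight, centeredGammaPDF, mul_assoc, mul_gammaPDFReal (by positivity) (by positivity)]
  ring

theorem hasDerivAt_steinWeight (hx : -ν < x) : HasDerivAt q (-x * ρ x) x := by
  have hxν : 0 < x + ν := neg_lt_iff_pos_add.mp hx
  have hlin : HasDerivAt (fun y ↦ 2 * (y + ν)) (2 * 1) x :=
    ((hasDerivAt_id x).add_const ν).const_mul 2
  refine (hlin.mul ((hasDerivAt_gammaPDFReal hxν).comp_add_const x ν)).congr_deriv ?_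
  rw [centeredGammaPDF]
  field_simp
  ring

theorem tendsto_steinWeight_nhdsGT (hν : 0 < ν) : Tendsto q (𝓝[>] (-ν)) (𝓝 0) := by
  have hshift : Tendsto (· + ν) (𝓝[>] (-ν)) (𝓝[>] 0) := by
    simpa using tendsto_map (f := (· + ν)) (x := 𝓝[>] (-ν))
  have hlim := ((tendsto_gammaPDFReal_nhdsGT_zero (a := ν / 2 + 1) (r := 1 / 2)
    (by linarith)).comp hshift).const_mul (2 * ν)
  rw [mul_zero] at hlim
  exact hlim.congr fun x ↦ (steinWeight_eq_gammaPDFReal hν x).symm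

theorem tendsto_steinWeight_atTop (hν : 0 < ν) : Tendsto q atTop (𝓝 0) := by
  have hlim := ((tendsto_gammaPDFReal_atTop (a := ν / 2 + 1) (r := 1 / 2) (by positivity)).comp
    (tendsto_atTop_add_const_right _ ν tendsto_id)).const_mul (2 * ν)
  rw [mul_zero] at hlim
  exact hlim.congr fun x ↦ (steinWeight_eq_gammaPDFReal hν x).symm

theorem tendsto_mul_steinWeight_atTop (hν : 0 < ν) :
    Tendsto (fun x ↦ x * q x) atTop (𝓝 0) := by
  have hlim := (((tendsto_gammaPDFReal_atTop (a := ν / 2 + 1 + 1) (r := 1 / 2)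
    (by positivity)).comp (tendsto_atTop_add_const_right _ ν tendsto_id)).const_mul
      (2 * ν * ((ν / 2 + 1) / (1 / 2)))).sub ((tendsto_steinWeight_atTop hν).const_mul ν)
  rw [mul_zero, mul_zero, sub_zero] at hlim
  refine hlim.congr fun x ↦ ?_
  have hmul := mul_gammaPDFReal (a := ν / 2 + 1) (r := 1 / 2) (by positivity) (by positivity)
    (x + ν)
  simp only [Function.comp_apply, id]
  rw [mul_assoc (2 * ν), ← hmul, steinWeight_eq_gammaPDFReal hν]
  ring

theorem integrable_mul_centeredGammaPDF (hν : 0 < ν) : Integrable (fun x ↦ x * ρ x) := by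
  have hq : Integrable q := by
    simpa only [funext (steinWeight_eq_gammaPDFReal hν)] using
      ((integrable_gammaPDFReal (by positivity) (by positivity)).comp_add_right ν).const_mul (2 * ν)
  refine ((hq.const_mul (1 / 2)).sub ((integrable_centeredGammaPDF hν).const_mul ν)).congr
    (ae_of_all _ fun x ↦ ?_)
  simp only [Pi.sub_apply, steinWeight]
  ring

theorem isProbabilityMeasure_centeredGammaLaw (hν : 0 < ν) :
    IsProbabilityMeasure (centeredGammaLaw ν) :=
  have := isProbabilityMeasure_gammaMeasure (a := ν / 2) (r := 1) (by positivity) one_pos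
  Measure.isProbabilityMeasure_map (by fun_prop)

theorem integral_centeredGammaLaw (hν : 0 < ν) (g : ℝ → ℝ) :
    ∫ x, g x ∂(centeredGammaLaw ν) = ∫ x in Ioi (-ν), g x * ρ x := by
  have hemb : MeasurableEmbedding (fun x : ℝ ↦ 2 * x - ν) :=
    (measurableEmbedding_subRight ν).comp (measurableEmbedding_mulLeft₀ two_ne_zero)
  have hsupp : ∀ x ∉ Ici (-ν), g x * ρ x = 0 := fun x hx ↦ by
    rw [centeredGammaPDF_of_lt (not_le.mp hx), mul_zero]
  calc ∫ x, g x ∂(centeredGammaLaw ν)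
      = ∫ x, gammaPDFReal (ν / 2) 1 x * g (2 * x - ν) := by
        rw [centeredGammaLaw, hemb.integral_map, integral_gammaMeasure (by positivity) one_pos]
    _ = 2 * ∫ x, g (2 * x - ν) * gammaPDFReal (ν / 2) (1 / 2) (2 * x) := by
        rw [← integral_const_mul]
        refine integral_congr_ae (ae_of_all _ fun x ↦ ?_)
        have hrate := gammaPDFReal_mul_rate (a := ν / 2) (r := 1 / 2) two_pos (by positivity) x
        rw [one_div, inv_mul_cancel₀ two_ne_zero] at hrate
        simp only [hrate, one_div]
        ring
    _ = ∫ t, g (t - ν) * gammaPDFReal (ν / 2) (1 / 2) t := by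
        rw [Measure.integral_comp_mul_left (fun t ↦ g (t - ν) * gammaPDFReal (ν / 2) (1 / 2) t)]
        norm_num
        ring
    _ = ∫ x, g x * ρ x := by
        rw [← integral_add_right_eq_self _ ν]
        simp only [add_sub_cancel_right, centeredGammaPDF]
    _ = ∫ x in Ioi (-ν), g x * ρ x := by
        rw [← integral_Ici_eq_integral_Ioi, setIntegral_eq_integral_of_forall_compl_eq_zero hsupp]

theorem cdf_centeredGammaLaw (hν : 0 < ν) (hx : -ν ≤ x) : Φ x = ∫ y in (-ν)..x, ρ y := by
  have := isProbabilityMeasure_centeredGammaLaw hν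
  rw [cdf_eq_real, ← integral_indicator_one measurableSet_Iic, integral_centeredGammaLaw hν,
    intervalIntegral.integral_of_le hx, ← Ioi_inter_Iic, ← setIntegral_indicator measurableSet_Iic]
  congr with y
  by_cases hy : y ∈ Iic x <;> simp [hy]

theorem hasDerivAt_cdf_centeredGammaLaw (hν : 0 < ν) (hx : -ν < x) : HasDerivAt Φ (ρ x) x := by
  refine (hasDerivAt_integral_of_integrableOn_Ioi (integrable_centeredGammaPDF hν).integrableOn
    continuousOn_centeredGammaPDF hx).congr_of_eventuallyEq ?_
  filter_upwards [Ioi_mem_nhds hx] with y hy using cdf_centeredGammaLaw hν (mem_Ioi.mp hy).le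

theorem hasDerivAt_one_sub_cdf_centeredGammaLaw (hν : 0 < ν) (hx : -ν < x) :
    HasDerivAt (fun y ↦ 1 - Φ y) (-ρ x) x :=
  (hasDerivAt_cdf_centeredGammaLaw hν hx).const_sub 1

theorem tendsto_cdf_centeredGammaLaw_nhdsGT (hν : 0 < ν) : Tendsto Φ (𝓝[>] (-ν)) (𝓝 0) := by
  refine (tendsto_integral_nhdsGT_zero (integrable_centeredGammaPDF hν).integrableOn).congr' ?_
  filter_upwards [self_mem_nhdsWithin] with y hy
  exact (cdf_centeredGammaLaw hν (mem_Ioi.mp hy).le).symm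

theorem hasDerivAt_lowerPartialMoment (hν : 0 < ν) (hx : -ν < x) :
    HasDerivAt (lowerPartialMoment ν) (Φ x) x := by
  have hmul := (hasDerivAt_id x).mul (hasDerivAt_cdf_centeredGammaLaw hν hx)
  refine ((hasDerivAt_steinWeight hx).add hmul).congr_deriv ?_
  simp only [id]
  ring

theorem hasDerivAt_upperPartialMoment (hν : 0 < ν) (hx : -ν < x) :
    HasDerivAt (upperPartialMoment ν) (-(1 - Φ x)) x := by
  have hmul := (hasDerivAt_id x).mul (hasDerivAt_one_sub_cdf_centeredGammaLaw hν hx)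
  refine ((hasDerivAt_steinWeight hx).sub hmul).congr_deriv ?_
  simp only [id]
  ring

theorem tendsto_lowerPartialMoment_nhdsGT (hν : 0 < ν) :
    Tendsto (lowerPartialMoment ν) (𝓝[>] (-ν)) (𝓝 0) := by
  have hid : Tendsto id (𝓝[>] (-ν)) (𝓝 (-ν)) := nhdsWithin_le_nhds
  have hlim := (tendsto_steinWeight_nhdsGT hν).add
    (hid.mul (tendsto_cdf_centeredGammaLaw_nhdsGT hν))
  rw [mul_zero, add_zero] at hlim
  exact hlim

theorem lowerPartialMoment_nonneg (hν : 0 < ν) (hx : -ν < x) : 0 ≤ lowerPartialMoment ν x :=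
  le_of_tendsto_nhdsGT_of_deriv_nonneg hx
    (fun _ hy ↦ hasDerivAt_lowerPartialMoment hν hy.1) (fun y _ ↦ cdf_nonneg _ y)
    (tendsto_lowerPartialMoment_nhdsGT hν)

theorem upperPartialMoment_nonneg (hν : 0 < ν) (hx : -ν < x) : 0 ≤ upperPartialMoment ν x := by
  have hderiv : ∀ y ∈ Ici x, HasDerivAt (fun y ↦ x * (1 - Φ y) - q y) ((y - x) * ρ y) y :=
    fun y hy ↦ (((hasDerivAt_one_sub_cdf_centeredGammaLaw hν (hx.trans_le hy)).const_mul x).sub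
      (hasDerivAt_steinWeight (hx.trans_le hy))).congr_deriv (by ring)
  have hlim : Tendsto (fun y ↦ x * (1 - Φ y) - q y) atTop (𝓝 (x * 0 - 0)) :=
    ((tendsto_one_sub_cdf_atTop _).const_mul x).sub (tendsto_steinWeight_atTop hν)
  have hle := le_of_tendsto_atTop_of_deriv_nonneg hderiv
    (fun y hy ↦ mul_nonneg (sub_nonneg.mpr hy) (centeredGammaPDF_pos hν (hx.trans_le hy)).le) hlim
  rw [upperPartialMoment]
  linarith

theorem tendsto_id_mul_one_sub_cdf_atTop (hν : 0 < ν) :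
    Tendsto (fun x ↦ x * (1 - Φ x)) atTop (𝓝 0) := by
  refine squeeze_zero' ?_ ?_ (tendsto_steinWeight_atTop hν)
  · filter_upwards [eventually_ge_atTop 0] with x hx
    exact mul_nonneg hx (one_sub_cdf_nonneg _ x)
  · filter_upwards [eventually_gt_atTop (-ν)] with x hx
    exact sub_nonneg.mp (upperPartialMoment_nonneg hν hx)

theorem tendsto_upperPartialMoment_atTop (hν : 0 < ν) :
    Tendsto (upperPartialMoment ν) atTop (𝓝 0) := by
  have hlim := (tendsto_steinWeight_atTop hν).sub (tendsto_id_mul_one_sub_cdf_atTop hν)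
  rw [sub_zero] at hlim
  exact hlim

theorem cdf_mul_upperPartialMoment_add :
    Φ x * upperPartialMoment ν x + (1 - Φ x) * lowerPartialMoment ν x = q x := by
  rw [upperPartialMoment, lowerPartialMoment]
  ring

theorem hasDerivAt_steinWeight_div_affine_sub_cdf {c : ℝ} (hν : 0 < ν) (hx : -ν < x)
    (hy : 1 + 4 * c - x ≠ 0) :
    HasDerivAt (fun t ↦ 4 * q t / (1 + 4 * c - t) - Φ t)
      (ρ x * (3 * (x + 1 - 4 * c / 3) ^ 2 + 4 / 3 * (3 * (2 * ν - 1) - 16 * c ^ 2)) /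
        (1 + 4 * c - x) ^ 2) x := by
  have hdiv := ((hasDerivAt_steinWeight hx).const_mul 4).div
    ((hasDerivAt_id x).const_sub (1 + 4 * c)) hy
  refine (hdiv.sub (hasDerivAt_cdf_centeredGammaLaw hν hx)).congr_deriv ?_
  simp only [steinWeight, id]
  field_simp
  ring

theorem affine_mul_cdf_le_steinWeight {c : ℝ} (hc : 16 * c ^ 2 ≤ 3 * (2 * ν - 1)) (hx : -ν < x) :
    (1 + 4 * c - x) * Φ x ≤ 4 * q x := by
  have hν : 0 < ν := by linarith [sq_nonneg c]
  rcases le_or_gt (1 + 4 * c - x) 0 with hy | hy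
  · exact (mul_nonpos_of_nonpos_of_nonneg hy (cdf_nonneg _ x)).trans
      (by linarith [steinWeight_pos hν hx])
  have hpos : ∀ t ∈ Ioc (-ν) x, 0 < 1 + 4 * c - t := fun t ht ↦ by linarith [ht.2]
  have hlim : Tendsto (fun t ↦ 4 * q t / (1 + 4 * c - t) - Φ t) (𝓝[>] (-ν)) (𝓝 0) := by
    have hden : Tendsto (fun t ↦ 1 + 4 * c - t) (𝓝[>] (-ν)) (𝓝 (1 + 4 * c - -ν)) :=
      tendsto_const_nhds.sub nhdsWithin_le_nhds
    simpa using (((tendsto_steinWeight_nhdsGT hν).const_mul 4).div hden (by linarith)).sub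
      (tendsto_cdf_centeredGammaLaw_nhdsGT hν)
  have hle := le_of_tendsto_nhdsGT_of_deriv_nonneg hx
    (fun t ht ↦ hasDerivAt_steinWeight_div_affine_sub_cdf hν ht.1 (hpos t ht).ne')
    (fun t ht ↦ div_nonneg (mul_nonneg (centeredGammaPDF_pos hν ht.1).le
      (by linarith [sq_nonneg (t + 1 - 4 * c / 3)])) (sq_nonneg _)) hlim
  rwa [sub_nonneg, le_div_iff₀ hy, mul_comm] at hle

theorem affine_mul_one_sub_cdf_le_steinWeight {c : ℝ} (hc : 16 * c ^ 2 ≤ 3 * (2 * ν - 1))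
    (hx : -ν < x) : (x - (1 + 4 * c)) * (1 - Φ x) ≤ 4 * q x := by
  have hν : 0 < ν := by linarith [sq_nonneg c]
  rcases le_or_gt (x - (1 + 4 * c)) 0 with hy | hy
  · exact (mul_nonpos_of_nonpos_of_nonneg hy (one_sub_cdf_nonneg _ x)).trans
      (by linarith [steinWeight_pos hν hx])
  have hneg : ∀ t ∈ Ici x, 1 + 4 * c - t < 0 := fun t ht ↦ by linarith [mem_Ici.mp ht]
  have hlim : Tendsto (fun t ↦ 4 * q t / (1 + 4 * c - t) - Φ t) atTop (𝓝 (0 - 1)) :=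
    (((tendsto_steinWeight_atTop hν).const_mul 4).div_atBot
      (tendsto_atBot_add_const_left _ _ tendsto_neg_atTop_atBot)).sub (tendsto_cdf_atTop _)
  have hle := le_of_tendsto_atTop_of_deriv_nonneg
    (fun t ht ↦ hasDerivAt_steinWeight_div_affine_sub_cdf hν (hx.trans_le ht) (hneg t ht).ne)
    (fun t ht ↦ div_nonneg (mul_nonneg (centeredGammaPDF_pos hν (hx.trans_le ht)).le
      (by linarith [sq_nonneg (t + 1 - 4 * c / 3)])) (sq_nonneg _)) hlim
  have hdiv : 4 * q x / (1 + 4 * c - x) ≤ -(1 - Φ x) := by linarith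
  rw [div_le_iff_of_neg (hneg x self_mem_Ici)] at hdiv
  linarith

theorem mul_cdf_mul_one_sub_cdf_le_steinWeight {c : ℝ} (hc : 16 * c ^ 2 ≤ 3 * (2 * ν - 1))
    (hx : -ν < x) : 2 * c * (Φ x * (1 - Φ x)) ≤ q x := by
  have hlow := mul_le_mul_of_nonneg_right (affine_mul_cdf_le_steinWeight hc hx)
    (one_sub_cdf_nonneg (centeredGammaLaw ν) x)
  have hupp := mul_le_mul_of_nonneg_right
    (affine_mul_one_sub_cdf_le_steinWeight (c := -c) (by linarith [neg_sq c]) hx)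
    (cdf_nonneg (centeredGammaLaw ν) x)
  linarith

theorem eight_mul_add_sub_mul_affine_pos {c : ℝ} (hc : 16 * c ^ 2 ≤ 3 * (2 * ν - 1)) (x : ℝ) :
    0 < 8 * (x + ν) - x * (7 + 4 * c - x) := by
  nlinarith [sq_nonneg (2 * x + (1 - 4 * c)), sq_nonneg (1 + 4 * c), sq_nonneg c]

theorem hasDerivAt_cdf_sub_affine_mul_steinWeight_div {c : ℝ} (hν : 0 < ν) (hx : -ν < x)
    (hz : 8 * (x + ν) - x * (7 + 4 * c - x) ≠ 0) :
    HasDerivAt (fun t ↦ Φ t - (7 + 4 * c - t) * q t / (8 * (t + ν) - t * (7 + 4 * c - t)))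
      (q x * (3 * (x + 3 - 4 * c / 3) ^ 2 + 4 / 3 * (15 * (2 * ν - 1) - 16 * c ^ 2)) /
        (8 * (x + ν) - x * (7 + 4 * c - x)) ^ 2) x := by
  have hid := hasDerivAt_id x
  have hlin := hid.const_sub (7 + 4 * c)
  have hdiv := (hlin.mul (hasDerivAt_steinWeight hx)).div
    (((hid.add_const ν).const_mul 8).sub (hid.mul hlin)) hz
  refine ((hasDerivAt_cdf_centeredGammaLaw hν hx).sub hdiv).congr_deriv ?_
  simp only [steinWeight, id, Pi.mul_apply, Pi.sub_apply] at hz ⊢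
  rw [eq_div_iff (pow_ne_zero 2 hz), sub_mul, div_mul_cancel₀ _ (pow_ne_zero 2 hz)]
  ring

theorem affine_mul_lowerPartialMoment_le {c : ℝ} (hc : 16 * c ^ 2 ≤ 3 * (2 * ν - 1)) (hx : -ν < x) :
    (7 + 4 * c - x) * lowerPartialMoment ν x ≤ 8 * (x + ν) * Φ x := by
  have hν : 0 < ν := by linarith [sq_nonneg c]
  have hlim : Tendsto
      (fun t ↦ Φ t - (7 + 4 * c - t) * q t / (8 * (t + ν) - t * (7 + 4 * c - t)))
      (𝓝[>] (-ν)) (𝓝 0) := by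
    have hid : Tendsto (fun t ↦ t) (𝓝[>] (-ν)) (𝓝 (-ν)) := nhdsWithin_le_nhds
    have hlin := hid.const_sub (7 + 4 * c)
    simpa using (tendsto_cdf_centeredGammaLaw_nhdsGT hν).sub
      ((hlin.mul (tendsto_steinWeight_nhdsGT hν)).div
        (((hid.add_const ν).const_mul 8).sub (hid.mul hlin))
        (eight_mul_add_sub_mul_affine_pos hc _).ne')
  have hle := le_of_tendsto_nhdsGT_of_deriv_nonneg hx
    (fun t ht ↦ hasDerivAt_cdf_sub_affine_mul_steinWeight_div hν ht.1
      (eight_mul_add_sub_mul_affine_pos hc t).ne')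
    (fun t ht ↦ div_nonneg (mul_nonneg (steinWeight_pos hν ht.1).le
      (by linarith [sq_nonneg (t + 3 - 4 * c / 3), sq_nonneg c])) (sq_nonneg _)) hlim
  rw [sub_nonneg, div_le_iff₀ (eight_mul_add_sub_mul_affine_pos hc x)] at hle
  rw [lowerPartialMoment]
  linarith

theorem affine_mul_upperPartialMoment_le {c : ℝ} (hc : 16 * c ^ 2 ≤ 3 * (2 * ν - 1)) (hx : -ν < x) :
    (x - (7 + 4 * c)) * upperPartialMoment ν x ≤ 8 * (x + ν) * (1 - Φ x) := by
  have hν : 0 < ν := by linarith [sq_nonneg c]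
  have hnum : Tendsto (fun t ↦ (7 + 4 * c - t) * q t) atTop (𝓝 0) := by
    simpa [sub_mul] using ((tendsto_steinWeight_atTop hν).const_mul (7 + 4 * c)).sub
      (tendsto_mul_steinWeight_atTop hν)
  have hden : Tendsto (fun t ↦ 8 * (t + ν) - t * (7 + 4 * c - t)) atTop atTop := by
    have hquad : Tendsto (fun t ↦ t * (t + (1 - 4 * c)) + 8 * ν) atTop atTop :=
      tendsto_atTop_add_const_right _ _
        (tendsto_id.atTop_mul_atTop₀ (tendsto_atTop_add_const_right _ _ tendsto_id))
    exact hquad.congr fun t ↦ by ring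
  have hle := le_of_tendsto_atTop_of_deriv_nonneg
    (fun t ht ↦ hasDerivAt_cdf_sub_affine_mul_steinWeight_div hν (hx.trans_le ht)
      (eight_mul_add_sub_mul_affine_pos hc t).ne')
    (fun t ht ↦ div_nonneg (mul_nonneg (steinWeight_pos hν (hx.trans_le ht)).le
      (by linarith [sq_nonneg (t + 3 - 4 * c / 3), sq_nonneg c])) (sq_nonneg _))
    ((tendsto_cdf_atTop _).sub (hnum.div_atTop hden))
  have hdiv : -(1 - Φ x) ≤ (7 + 4 * c - x) * q x / (8 * (x + ν) - x * (7 + 4 * c - x)) := by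
    linarith
  rw [le_div_iff₀ (eight_mul_add_sub_mul_affine_pos hc x)] at hdiv
  rw [upperPartialMoment]
  linarith

theorem mul_lowerPartialMoment_mul_upperPartialMoment_le {c : ℝ}
    (hc : 16 * c ^ 2 ≤ 3 * (2 * ν - 1)) (hx : -ν < x) :
    c * (lowerPartialMoment ν x * upperPartialMoment ν x) ≤ (x + ν) * q x := by
  have hν : 0 < ν := by linarith [sq_nonneg c]
  have hlow := mul_le_mul_of_nonneg_right (affine_mul_lowerPartialMoment_le hc hx)
    (upperPartialMoment_nonneg hν hx)
  have hupp := mul_le_mul_of_nonneg_right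
    (affine_mul_upperPartialMoment_le (c := -c) (by linarith [neg_sq c]) hx)
    (lowerPartialMoment_nonneg hν hx)
  rw [← cdf_mul_upperPartialMoment_add]
  linarith

end CenteredGamma

/-- The integral from `-ν` to `x` of the centered test function `h - E h(F(ν))` against the law of
`F(ν)`. -/
noncomputable def steinPrimitive (ν : ℝ) (h : ℝ → ℝ) (x : ℝ) : ℝ :=
  ∫ y in (-ν)..x, (h y - ∫ z, h z ∂(centeredGammaLaw ν)) * centeredGammaPDF ν y

/-- The bounded solution on `(-ν, ∞)` of the Gamma Stein equation associated with `h` and `F(ν)`. -/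
noncomputable def steinSolution (ν : ℝ) (h : ℝ → ℝ) (x : ℝ) : ℝ :=
  steinPrimitive ν h x / steinWeight ν x

/-- The derivative of `steinSolution ν h` on `(-ν, ∞)`, obtained by solving the Gamma Stein equation
for `f'`. -/
noncomputable def steinSolutionDeriv (ν : ℝ) (h : ℝ → ℝ) (x : ℝ) : ℝ :=
  (h x - ∫ z, h z ∂(centeredGammaLaw ν) + x * steinSolution ν h x) / (2 * (x + ν))

section SteinSolution

variable {ν x c C : ℝ} {h h' : ℝ → ℝ}

local notation "ρ" => centeredGammaPDF ν
local notation "q" => steinWeight ν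
local notation "Φ" => cdf (centeredGammaLaw ν)
local notation "F" => steinPrimitive ν h
local notation "m" => ∫ z, h z ∂(centeredGammaLaw ν)

theorem abs_le_of_abs_deriv_le (hν : 0 < ν) (hh : ∀ x, -ν < x → HasDerivAt h (h' x) x)
    (hh' : ∀ x, -ν < x → |h' x| ≤ C) (hx : -ν < x) : |h x| ≤ |h 0| + C * |x| := by
  have hdiff : |h x - h 0| ≤ C * |x - 0| :=
    (convex_Ioi (-ν)).norm_image_sub_le_of_norm_hasDerivWithin_le
      (fun y hy ↦ (hh y hy).hasDerivWithinAt) hh' (neg_lt_zero.mpr hν) hx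
  rw [sub_zero] at hdiff
  linarith [abs_sub_abs_le_abs_sub (h x) (h 0)]

theorem integrableOn_mul_centeredGammaPDF_of_abs_deriv_le (hν : 0 < ν)
    (hh : ∀ x, -ν < x → HasDerivAt h (h' x) x) (hh' : ∀ x, -ν < x → |h' x| ≤ C) :
    IntegrableOn (fun y ↦ h y * ρ y) (Ioi (-ν)) := by
  have hcont : ContinuousOn (fun y ↦ h y * ρ y) (Ioi (-ν)) :=
    (HasDerivAt.continuousOn hh).mul continuousOn_centeredGammaPDF
  have hdom : Integrable (fun y ↦ |h 0| * ρ y + C * |y * ρ y|) :=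
    ((integrable_centeredGammaPDF hν).const_mul _).add
      ((integrable_mul_centeredGammaPDF hν).abs.const_mul C)
  refine hdom.integrableOn.mono' (hcont.aestronglyMeasurable measurableSet_Ioi) ?_
  filter_upwards [ae_restrict_mem measurableSet_Ioi] with y hy
  have hρ := (centeredGammaPDF_pos hν hy).le
  rw [norm_eq_abs, abs_mul, abs_mul, abs_of_nonneg hρ, ← mul_assoc, ← add_mul]
  exact mul_le_mul_of_nonneg_right (abs_le_of_abs_deriv_le hν hh hh' hy) hρ

theorem tendsto_mul_cdf_of_abs_deriv_le (hν : 0 < ν) (hh : ∀ x, -ν < x → HasDerivAt h (h' x) x)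
    (hh' : ∀ x, -ν < x → |h' x| ≤ C) : Tendsto (fun x ↦ h x * Φ x) (𝓝[>] (-ν)) (𝓝 0) := by
  have habs : Tendsto (fun x ↦ |h 0| + C * |x|) (𝓝[>] (-ν)) (𝓝 (|h 0| + C * |-ν|)) :=
    Continuous.tendsto (by fun_prop) (-ν) |>.mono_left nhdsWithin_le_nhds
  have hbound := habs.mul (tendsto_cdf_centeredGammaLaw_nhdsGT hν)
  rw [mul_zero] at hbound
  refine squeeze_zero_norm' ?_ hbound
  filter_upwards [self_mem_nhdsWithin] with x hx
  rw [norm_eq_abs, abs_mul, abs_of_nonneg (cdf_nonneg _ x)]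
  exact mul_le_mul_of_nonneg_right (abs_le_of_abs_deriv_le hν hh hh' hx) (cdf_nonneg _ x)

theorem tendsto_mul_one_sub_cdf_of_abs_deriv_le (hν : 0 < ν)
    (hh : ∀ x, -ν < x → HasDerivAt h (h' x) x) (hh' : ∀ x, -ν < x → |h' x| ≤ C) :
    Tendsto (fun x ↦ h x * (1 - Φ x)) atTop (𝓝 0) := by
  have hbound := ((tendsto_one_sub_cdf_atTop (centeredGammaLaw ν)).const_mul |h 0|).add
    ((tendsto_id_mul_one_sub_cdf_atTop hν).const_mul C)
  rw [mul_zero, mul_zero, add_zero] at hbound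
  refine squeeze_zero_norm' ?_ hbound
  filter_upwards [eventually_gt_atTop 0] with x hx
  have hle := abs_le_of_abs_deriv_le hν hh hh' (by linarith : -ν < x)
  rw [norm_eq_abs, abs_mul, abs_of_nonneg (one_sub_cdf_nonneg _ x), ← mul_assoc, ← add_mul]
  rw [abs_of_pos hx] at hle
  exact mul_le_mul_of_nonneg_right hle (one_sub_cdf_nonneg _ x)

theorem integrableOn_sub_mean_mul_centeredGammaPDF (hν : 0 < ν)
    (hint : IntegrableOn (fun y ↦ h y * ρ y) (Ioi (-ν))) :
    IntegrableOn (fun y ↦ (h y - m) * ρ y) (Ioi (-ν)) := by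
  simp only [sub_mul]
  exact hint.sub ((integrable_centeredGammaPDF hν).const_mul m).integrableOn

theorem integral_sub_mean_mul_centeredGammaPDF (hν : 0 < ν)
    (hint : IntegrableOn (fun y ↦ h y * ρ y) (Ioi (-ν))) :
    ∫ y in Ioi (-ν), (h y - m) * ρ y = 0 := by
  have := isProbabilityMeasure_centeredGammaLaw hν
  have hconst := integral_centeredGammaLaw hν fun _ ↦ m
  rw [integral_const, probReal_univ, one_smul] at hconst
  simp only [sub_mul]
  rw [integral_sub hint ((integrable_centeredGammaPDF hν).const_mul m).integrableOn, ← hconst,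
    ← integral_centeredGammaLaw hν, sub_self]

theorem hasDerivAt_steinPrimitive (hν : 0 < ν) (hcont : ContinuousOn h (Ioi (-ν)))
    (hint : IntegrableOn (fun y ↦ h y * ρ y) (Ioi (-ν))) (hx : -ν < x) :
    HasDerivAt F ((h x - m) * ρ x) x :=
  hasDerivAt_integral_of_integrableOn_Ioi (integrableOn_sub_mean_mul_centeredGammaPDF hν hint)
    ((hcont.sub continuousOn_const).mul continuousOn_centeredGammaPDF) hx

theorem tendsto_steinPrimitive_nhdsGT (hν : 0 < ν)
    (hint : IntegrableOn (fun y ↦ h y * ρ y) (Ioi (-ν))) : Tendsto F (𝓝[>] (-ν)) (𝓝 0) :=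
  tendsto_integral_nhdsGT_zero (integrableOn_sub_mean_mul_centeredGammaPDF hν hint)

theorem tendsto_steinPrimitive_atTop (hν : 0 < ν)
    (hint : IntegrableOn (fun y ↦ h y * ρ y) (Ioi (-ν))) : Tendsto F atTop (𝓝 0) := by
  have hlim := intervalIntegral_tendsto_integral_Ioi (-ν)
    (integrableOn_sub_mean_mul_centeredGammaPDF hν hint) tendsto_id
  rwa [integral_sub_mean_mul_centeredGammaPDF hν hint] at hlim

theorem hasDerivAt_steinSolution (hν : 0 < ν) (hcont : ContinuousOn h (Ioi (-ν)))
    (hint : IntegrableOn (fun y ↦ h y * ρ y) (Ioi (-ν))) (hx : -ν < x) :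
    HasDerivAt (steinSolution ν h) (steinSolutionDeriv ν h x) x := by
  have hρ := centeredGammaPDF_pos hν hx
  have hxν : 0 < x + ν := neg_lt_iff_pos_add.mp hx
  refine ((hasDerivAt_steinPrimitive hν hcont hint hx).div (hasDerivAt_steinWeight hx)
    (steinWeight_pos hν hx).ne').congr_deriv ?_
  rw [steinSolutionDeriv, steinSolution, steinWeight]
  field_simp
  ring

theorem steinSolutionDeriv_equation (hx : -ν < x) :
    2 * (x + ν) * steinSolutionDeriv ν h x - x * steinSolution ν h x = h x - m := by
  have hxν : 0 < x + ν := neg_lt_iff_pos_add.mp hx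
  rw [steinSolutionDeriv]
  field_simp
  ring

theorem abs_steinPrimitive_add_mean_mul_cdf_le (hν : 0 < ν) (hcont : ContinuousOn h (Ioi (-ν)))
    (hint : IntegrableOn (fun y ↦ h y * ρ y) (Ioi (-ν))) (hC : ∀ x, -ν < x → |h x| ≤ C)
    (hx : -ν < x) : |F x + m * Φ x| ≤ C * Φ x := by
  have hΦ : ∀ y ∈ Ioc (-ν) x, HasDerivAt Φ (ρ y) y :=
    fun y hy ↦ hasDerivAt_cdf_centeredGammaLaw hν hy.1
  have hlim := tendsto_cdf_centeredGammaLaw_nhdsGT hν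
  refine abs_le_of_abs_deriv_le_of_tendsto_nhdsGT (u := fun y ↦ F y + m * Φ y)
    (v := fun y ↦ C * Φ y) hx
    (fun y hy ↦ (hasDerivAt_steinPrimitive hν hcont hint hy.1).add ((hΦ y hy).const_mul m))
    (fun y hy ↦ (hΦ y hy).const_mul C) (fun y hy ↦ ?_)
    (by simpa using (tendsto_steinPrimitive_nhdsGT hν hint).add (hlim.const_mul m))
    (by simpa using hlim.const_mul C)
  have hρ := (centeredGammaPDF_pos hν hy.1).le
  rw [← add_mul, sub_add_cancel, abs_mul, abs_of_nonneg hρ]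
  exact mul_le_mul_of_nonneg_right (hC y hy.1) hρ

theorem abs_steinPrimitive_sub_mean_mul_one_sub_cdf_le (hν : 0 < ν)
    (hcont : ContinuousOn h (Ioi (-ν))) (hint : IntegrableOn (fun y ↦ h y * ρ y) (Ioi (-ν)))
    (hC : ∀ x, -ν < x → |h x| ≤ C) (hx : -ν < x) :
    |F x - m * (1 - Φ x)| ≤ C * (1 - Φ x) := by
  have hΦ : ∀ y ∈ Ici x, HasDerivAt (fun y ↦ 1 - Φ y) (-ρ y) y :=
    fun y hy ↦ hasDerivAt_one_sub_cdf_centeredGammaLaw hν (hx.trans_le hy)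
  have hlim := tendsto_one_sub_cdf_atTop (centeredGammaLaw ν)
  refine abs_le_of_abs_deriv_le_of_tendsto_atTop (u := fun y ↦ F y - m * (1 - Φ y))
    (v := fun y ↦ C * (1 - Φ y)) (v' := fun y ↦ C * ρ y)
    (fun y hy ↦ (hasDerivAt_steinPrimitive hν hcont hint (hx.trans_le hy)).sub
      ((hΦ y hy).const_mul m))
    (fun y hy ↦ ((hΦ y hy).const_mul C).congr_deriv (mul_neg C (ρ y))) (fun y hy ↦ ?_)
    (by simpa using (tendsto_steinPrimitive_atTop hν hint).sub (hlim.const_mul m))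
    (by simpa using hlim.const_mul C)
  have hρ := (centeredGammaPDF_pos hν (hx.trans_le hy)).le
  rw [mul_neg, sub_neg_eq_add, ← add_mul, sub_add_cancel, abs_mul, abs_of_nonneg hρ]
  exact mul_le_mul_of_nonneg_right (hC y (hx.trans_le hy)) hρ

theorem abs_sub_mean_mul_cdf_sub_steinPrimitive_le (hν : 0 < ν)
    (hh : ∀ x, -ν < x → HasDerivAt h (h' x) x) (hh' : ∀ x, -ν < x → |h' x| ≤ C) (hx : -ν < x) :
    |(h x - m) * Φ x - F x| ≤ C * lowerPartialMoment ν x := by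
  have hcont : ContinuousOn h (Ioi (-ν)) := HasDerivAt.continuousOn hh
  have hint := integrableOn_mul_centeredGammaPDF_of_abs_deriv_le hν hh hh'
  have hlim : Tendsto (fun y ↦ (h y - m) * Φ y - F y) (𝓝[>] (-ν)) (𝓝 (0 - 0)) :=
    (tendsto_mul_cdf_of_abs_deriv_le hν (fun y hy ↦ (hh y hy).sub_const m) hh').sub
      (tendsto_steinPrimitive_nhdsGT hν hint)
  have hderiv : ∀ y ∈ Ioc (-ν) x,
      HasDerivAt (fun y ↦ (h y - m) * Φ y - F y) (h' y * Φ y) y := fun y hy ↦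
    ((((hh y hy.1).sub_const m).mul (hasDerivAt_cdf_centeredGammaLaw hν hy.1)).sub
      (hasDerivAt_steinPrimitive hν hcont hint hy.1)).congr_deriv (by ring)
  rw [sub_zero] at hlim
  refine abs_le_of_abs_deriv_le_of_tendsto_nhdsGT (v := fun y ↦ C * lowerPartialMoment ν y) hx
    hderiv (fun y hy ↦ (hasDerivAt_lowerPartialMoment hν hy.1).const_mul C) (fun y hy ↦ ?_) hlim
    (by simpa using (tendsto_lowerPartialMoment_nhdsGT hν).const_mul C)
  rw [abs_mul, abs_of_nonneg (cdf_nonneg _ y)]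
  exact mul_le_mul_of_nonneg_right (hh' y hy.1) (cdf_nonneg _ y)

theorem abs_sub_mean_mul_one_sub_cdf_add_steinPrimitive_le (hν : 0 < ν)
    (hh : ∀ x, -ν < x → HasDerivAt h (h' x) x) (hh' : ∀ x, -ν < x → |h' x| ≤ C) (hx : -ν < x) :
    |(h x - m) * (1 - Φ x) + F x| ≤ C * upperPartialMoment ν x := by
  have hcont : ContinuousOn h (Ioi (-ν)) := HasDerivAt.continuousOn hh
  have hint := integrableOn_mul_centeredGammaPDF_of_abs_deriv_le hν hh hh'
  have hlim : Tendsto (fun y ↦ (h y - m) * (1 - Φ y) + F y) atTop (𝓝 (0 + 0)) :=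
    (tendsto_mul_one_sub_cdf_of_abs_deriv_le hν (fun y hy ↦ (hh y hy).sub_const m) hh').add
      (tendsto_steinPrimitive_atTop hν hint)
  have hderiv : ∀ y ∈ Ici x,
      HasDerivAt (fun y ↦ (h y - m) * (1 - Φ y) + F y) (h' y * (1 - Φ y)) y := fun y hy ↦
    have hy' := hx.trans_le hy
    ((((hh y hy').sub_const m).mul (hasDerivAt_one_sub_cdf_centeredGammaLaw hν hy')).add
      (hasDerivAt_steinPrimitive hν hcont hint hy')).congr_deriv (by ring)
  rw [add_zero] at hlim
  refine abs_le_of_abs_deriv_le_of_tendsto_atTop (v := fun y ↦ C * upperPartialMoment ν y)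
    (v' := fun y ↦ C * (1 - Φ y)) hderiv
    (fun y hy ↦ ((hasDerivAt_upperPartialMoment hν (hx.trans_le hy)).const_mul C).congr_deriv
      (mul_neg _ _)) (fun y hy ↦ ?_) hlim
    (by simpa using (tendsto_upperPartialMoment_atTop hν).const_mul C)
  rw [abs_mul, abs_of_nonneg (one_sub_cdf_nonneg _ y)]
  exact mul_le_mul_of_nonneg_right (hh' y (hx.trans_le hy)) (one_sub_cdf_nonneg _ y)

theorem abs_steinSolution_le_of_abs_deriv_le (hν : 0 < ν) (hh : ∀ x, -ν < x → HasDerivAt h (h' x) x)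
    (hh' : ∀ x, -ν < x → |h' x| ≤ C) (hx : -ν < x) : |steinSolution ν h x| ≤ C := by
  have hlow := abs_sub_mean_mul_cdf_sub_steinPrimitive_le hν hh hh' hx
  have hupp := abs_sub_mean_mul_one_sub_cdf_add_steinPrimitive_le hν hh hh' hx
  have hq := steinWeight_pos hν hx
  rw [steinSolution, abs_div, abs_of_pos hq, div_le_iff₀ hq]
  calc |F x|
      = |Φ x * ((h x - m) * (1 - Φ x) + F x) - (1 - Φ x) * ((h x - m) * Φ x - F x)| := by
        ring_nf
    _ ≤ Φ x * (C * upperPartialMoment ν x) + (1 - Φ x) * (C * lowerPartialMoment ν x) := by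
        refine (abs_sub _ _).trans ?_
        rw [abs_mul, abs_mul, abs_of_nonneg (cdf_nonneg _ x),
          abs_of_nonneg (one_sub_cdf_nonneg _ x)]
        have := one_sub_cdf_nonneg (centeredGammaLaw ν) x
        have := cdf_nonneg (centeredGammaLaw ν) x
        gcongr
    _ = C * q x := by
        rw [← cdf_mul_upperPartialMoment_add]
        ring

theorem abs_steinSolution_le_div_of_abs_le (hc₀ : 0 < c) (hc : 16 * c ^ 2 ≤ 3 * (2 * ν - 1))
    (hcont : ContinuousOn h (Ioi (-ν))) (hint : IntegrableOn (fun y ↦ h y * ρ y) (Ioi (-ν)))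
    (hC : ∀ x, -ν < x → |h x| ≤ C) (hx : -ν < x) : |steinSolution ν h x| ≤ C / c := by
  have hν : 0 < ν := by linarith [sq_nonneg c]
  have hlow := abs_steinPrimitive_add_mean_mul_cdf_le hν hcont hint hC hx
  have hupp := abs_steinPrimitive_sub_mean_mul_one_sub_cdf_le hν hcont hint hC hx
  have hC₀ : 0 ≤ C := (abs_nonneg _).trans (hC x hx)
  have hΦ₀ := cdf_nonneg (centeredGammaLaw ν) x
  have hΦ₁ := one_sub_cdf_nonneg (centeredGammaLaw ν) x
  have hq := steinWeight_pos hν hx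
  rw [steinSolution, abs_div, abs_of_pos hq, div_le_iff₀ hq, div_mul_eq_mul_div, le_div_iff₀ hc₀]
  calc |F x| * c
      = |(1 - Φ x) * (F x + m * Φ x) + Φ x * (F x - m * (1 - Φ x))| * c := by ring_nf
    _ ≤ ((1 - Φ x) * (C * Φ x) + Φ x * (C * (1 - Φ x))) * c := by
        refine mul_le_mul_of_nonneg_right ((abs_add_le _ _).trans ?_) hc₀.le
        rw [abs_mul, abs_mul, abs_of_nonneg hΦ₀, abs_of_nonneg hΦ₁]
        gcongr
    _ = C * (2 * c * (Φ x * (1 - Φ x))) := by ring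
    _ ≤ C * q x := mul_le_mul_of_nonneg_left (mul_cdf_mul_one_sub_cdf_le_steinWeight hc hx) hC₀

theorem abs_steinSolutionDeriv_le_div_of_abs_deriv_le (hc₀ : 0 < c)
    (hc : 16 * c ^ 2 ≤ 3 * (2 * ν - 1)) (hh : ∀ x, -ν < x → HasDerivAt h (h' x) x)
    (hh' : ∀ x, -ν < x → |h' x| ≤ C) (hx : -ν < x) :
    |steinSolutionDeriv ν h x| ≤ C / c := by
  have hν : 0 < ν := by linarith [sq_nonneg c]
  set A := upperPartialMoment ν x with hA
  set B := lowerPartialMoment ν x with hB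
  have hA₀ : 0 ≤ A := upperPartialMoment_nonneg hν hx
  have hB₀ : 0 ≤ B := lowerPartialMoment_nonneg hν hx
  have hlow := abs_sub_mean_mul_cdf_sub_steinPrimitive_le hν hh hh' hx
  have hupp := abs_sub_mean_mul_one_sub_cdf_add_steinPrimitive_le hν hh hh' hx
  have hC₀ : 0 ≤ C := (abs_nonneg _).trans (hh' x hx)
  have hq := steinWeight_pos hν hx
  have hw : 0 < 2 * (x + ν) * q x := mul_pos (by linarith) hq
  have hsol : steinSolutionDeriv ν h x =
      (((h x - m) * Φ x - F x) * A + ((h x - m) * (1 - Φ x) + F x) * B) /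
        (2 * (x + ν) * q x) := by
    have hxν : 0 < x + ν := neg_lt_iff_pos_add.mp hx
    rw [steinSolutionDeriv, steinSolution, hA, hB, upperPartialMoment, lowerPartialMoment]
    field_simp
    ring
  rw [hsol, abs_div, abs_of_pos hw, div_le_iff₀ hw, div_mul_eq_mul_div, le_div_iff₀ hc₀]
  calc |((h x - m) * Φ x - F x) * A + ((h x - m) * (1 - Φ x) + F x) * B| * c
      ≤ (C * B * A + C * A * B) * c := by
        refine mul_le_mul_of_nonneg_right ((abs_add_le _ _).trans ?_) hc₀.le
        rw [abs_mul, abs_mul, abs_of_nonneg hA₀, abs_of_nonneg hB₀]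
        gcongr
    _ = 2 * C * (c * (B * A)) := by ring
    _ ≤ 2 * C * ((x + ν) * q x) := mul_le_mul_of_nonneg_left
        (mul_lowerPartialMoment_mul_upperPartialMoment_le hc hx) (by positivity)
    _ = C * (2 * (x + ν) * q x) := by ring

end SteinSolution

theorem sixteen_mul_inv_sqrt_sq_le {ν : ℝ} (hν : 1 ≤ ν) :
    16 * (√(2 * π / ν))⁻¹ ^ 2 ≤ 3 * (2 * ν - 1) := by
  rw [inv_pow, sq_sqrt (by positivity), inv_div, ← mul_div_assoc, div_le_iff₀ (by positivity)]
  nlinarith [pi_gt_three]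

theorem chi_square_stein_equation_solution_general (ν : ℝ) (hν : 1 ≤ ν) (h h' : ℝ → ℝ)
    (hd1 : ∀ x : ℝ, -ν < x → HasDerivAt h (h' x) x)
    (hd1b : ∃ M, ∀ x : ℝ, -ν < x → |h' x| ≤ M) :
    ∃ f f' : ℝ → ℝ,
      (∃ M, ∀ x : ℝ, -ν < x → |f x| ≤ M) ∧
      (∀ x : ℝ, -ν < x → HasDerivAt f (f' x) x) ∧
      (∀ x : ℝ, -ν < x →
        2 * (x + ν) * f' x - x * f x = h x - ∫ y, h y ∂(centeredGammaLaw ν)) ∧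
      (∀ C : ℝ, (∀ x : ℝ, -ν < x → |h x| ≤ C) →
        ∀ x : ℝ, -ν < x → |f x| ≤ √(2 * π / ν) * C) ∧
      (∀ C : ℝ, (∀ x : ℝ, -ν < x → |h' x| ≤ C) →
        ∀ x : ℝ, -ν < x → |f' x| ≤ √(2 * π / ν) * C) := by
  obtain ⟨M, hM⟩ := hd1b
  have hν₀ : 0 < ν := one_pos.trans_le hν
  have hcont : ContinuousOn h (Ioi (-ν)) := HasDerivAt.continuousOn hd1
  have hint := integrableOn_mul_centeredGammaPDF_of_abs_deriv_le hν₀ hd1 hM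
  have hc₀ : 0 < (√(2 * π / ν))⁻¹ := by positivity
  have hc := sixteen_mul_inv_sqrt_sq_le hν
  have hdiv : ∀ C : ℝ, C / (√(2 * π / ν))⁻¹ = √(2 * π / ν) * C := fun C ↦ by
    rw [div_inv_eq_mul, mul_comm]
  exact ⟨steinSolution ν h, steinSolutionDeriv ν h,
    ⟨M, fun x hx ↦ abs_steinSolution_le_of_abs_deriv_le hν₀ hd1 hM hx⟩,
    fun x hx ↦ hasDerivAt_steinSolution hν₀ hcont hint hx,
    fun x hx ↦ steinSolutionDeriv_equation hx,
    fun C hC x hx ↦ (abs_steinSolution_le_div_of_abs_le hc₀ hc hcont hint hC hx).trans_eq (hdiv C),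
    fun C hC x hx ↦
      (abs_steinSolutionDeriv_le_div_of_abs_deriv_le hc₀ hc hd1 hC hx).trans_eq (hdiv C)⟩

/-- For an integer `ν ≥ 1`: if `h` is twice differentiable on `(−ν,∞)` with bounded first and
second derivatives and `|h(x)| ≤ c·e^{ax}` there, for some `c > 0` and `a < 1/2`, then the Gamma
Stein equation `2(x+ν) f'(x) − x f(x) = h(x) − E[h(F(ν))]` on `(−ν,∞)` has a solution `f` which
is bounded on `(−ν,∞)`, differentiable, with `‖f‖_∞ ≤ √(2π/ν)·‖h‖_∞` and
`‖f'‖_∞ ≤ √(2π/ν)·‖h'‖_∞`. -/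
theorem chi_square_stein_equation_solution (ν : ℕ) (hν : 1 ≤ ν)
    (h h' h'' : ℝ → ℝ)
    (hd1 : ∀ x : ℝ, -(ν : ℝ) < x → HasDerivAt h (h' x) x)
    (hd2 : ∀ x : ℝ, -(ν : ℝ) < x → HasDerivAt h' (h'' x) x)
    (hd1b : ∃ M, ∀ x : ℝ, -(ν : ℝ) < x → |h' x| ≤ M)
    (hd2b : ∃ M, ∀ x : ℝ, -(ν : ℝ) < x → |h'' x| ≤ M)
    (hgrowth : ∃ c > (0 : ℝ), ∃ a < (1 : ℝ) / 2, ∀ x : ℝ, -(ν : ℝ) < x →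
      |h x| ≤ c * Real.exp (a * x)) :
    ∃ f f' : ℝ → ℝ,
      (∃ M, ∀ x : ℝ, -(ν : ℝ) < x → |f x| ≤ M) ∧
      (∀ x : ℝ, -(ν : ℝ) < x → HasDerivAt f (f' x) x) ∧
      (∀ x : ℝ, -(ν : ℝ) < x →
        2 * (x + ν) * f' x - x * f x = h x - ∫ y, h y ∂(centeredGammaLaw ν)) ∧
      (∀ C : ℝ, (∀ x : ℝ, -(ν : ℝ) < x → |h x| ≤ C) →
        ∀ x : ℝ, -(ν : ℝ) < x → |f x| ≤ Real.sqrt (2 * π / ν) * C) ∧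
      (∀ C : ℝ, (∀ x : ℝ, -(ν : ℝ) < x → |h' x| ≤ C) →
        ∀ x : ℝ, -(ν : ℝ) < x → |f' x| ≤ Real.sqrt (2 * π / ν) * C) := by
  exact chi_square_stein_equation_solution_general ν (mod_cast hν) h h' hd1 hd1b
end

section
/- Let V = (V₁,…,V_n) be a vector of i.i.d. standard Gaussian random variables and let g : ℝⁿ → ℝ be a smooth function such that g and all its partial derivatives have subexponential growth at infinity, E[g(V)] = 0 and E[g(V)²] = 1, and assume the law of Y := g(V) is absolutely continuous with respect to Lebesgue measure. Then for every Lipschitz function f : ℝ → ℝ (with f' its almost-everywhere derivative), E[Y f(Y)] = E[S(V) f'(Y)], where for v ∈ ℝⁿ, S(v) = ∫₀¹ (1/(2√t)) E[ Σ_{i=1}^n (∂g/∂v_i)(v) (∂g/∂v_i)(√t v + √(1−t) V) ] dt. -/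
open MeasureTheory ProbabilityTheory Real Set

/-- Chatterjee's function `S(v) = ∫₀¹ (1/(2√t)) E[ Σᵢ ∂ᵢg(v) ∂ᵢg(√t v + √(1−t) V) ] dt`. -/
noncomputable def chatterjeeS {Ω : Type*} [MeasurableSpace Ω] (P : Measure Ω)
    {n : ℕ} (V : Ω → (Fin n → ℝ)) (g : (Fin n → ℝ) → ℝ) (v : Fin n → ℝ) : ℝ :=
  ∫ t in Set.Ioc (0 : ℝ) 1, (1 / (2 * Real.sqrt t)) *
    ∫ ω, (∑ i : Fin n, fderiv ℝ g v (Pi.single i 1) *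
      fderiv ℝ g (Real.sqrt t • v + Real.sqrt (1 - t) • V ω) (Pi.single i 1)) ∂P

/-!
Let `X`, `Y` be independent with a centred Gaussian law. Differentiating
`E[g(X) F(cos θ X + sin θ Y)]` in `θ` and integrating by parts in `Y` writes
`Cov(g(X), F(X))` as an integral over `θ ∈ (0, π/2]` of the covariance pairing of `DF(X)` with
`sin θ Dg(cos θ X + sin θ Y)`. For `F = f ∘ g` and `t = cos² θ` this is `E[S(X) f'(g(X))]`.

`(X, Y)` may be reflected in the plane `(cos θ, sin θ)` without changing its law, which moves the
dependence on `θ` off `F`; this is what lets `F` be merely Lipschitz and differentiable almost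
everywhere. The same device proves the integration by parts formula: differentiate
`E[ℓ(Y) F(cos t X + sin t Y)] = sin t E[ℓ(X) F(X)]` at `t = 0`.

The chain rule for `f ∘ g` holds almost everywhere although the law of `g(X)` may charge the null
set where `f` is not differentiable: almost everywhere on the preimage of a null set under a `C¹`
map the derivative is not surjective, so for real-valued `g` it vanishes.
-/

open scoped Topology

section ExponentialGrowth

variable {X Y G : Type*} [NormedAddCommGroup X] [NormedAddCommGroup Y]
  [NormedAddCommGroup G]

/-- At most exponential growth: `‖h x‖ ≤ C exp (a ‖x‖)` for some `C` and `a ≥ 0`. -/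
def ExpBounded (h : X → G) : Prop :=
  ∃ C a : ℝ, 0 ≤ a ∧ ∀ x, ‖h x‖ ≤ C * exp (a * ‖x‖)

/-- Lipschitz continuity with a constant that grows at most exponentially in the two points. -/
def ExpLipschitz (F : X → G) : Prop :=
  ∃ C a : ℝ, 0 ≤ C ∧ 0 ≤ a ∧ ∀ x y, ‖F x - F y‖ ≤ C * exp (a * (‖x‖ + ‖y‖)) * ‖x - y‖

/-- The norm has exponential moments of all orders under `μ`. -/
def HasExpMoments [MeasurableSpace X] (μ : Measure X) : Prop :=
  ∀ a : ℝ, Integrable (fun x => exp (a * ‖x‖)) μ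

namespace ExpBounded

lemma of_norm_le_const {h : X → G} (C : ℝ) (hC : ∀ x, ‖h x‖ ≤ C) : ExpBounded h :=
  ⟨C, 0, le_rfl, fun x => by simpa using hC x⟩

lemma of_norm_le_mul_norm {h : X → G} {C : ℝ} (hC : 0 ≤ C) (hh : ∀ x, ‖h x‖ ≤ C * ‖x‖) :
    ExpBounded h :=
  ⟨C, 1, zero_le_one, fun x => (hh x).trans <| by
    gcongr
    linarith [add_one_le_exp (1 * ‖x‖)]⟩

lemma comp {h : X → G} (hh : ExpBounded h) {φ : Y → X} {c : ℝ} (hφ : ∀ y, ‖φ y‖ ≤ c * ‖y‖)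
    (hc : 0 ≤ c) : ExpBounded fun y => h (φ y) := by
  obtain ⟨C, a, ha, hCa⟩ := hh
  have hC : 0 ≤ C := nonneg_of_mul_nonneg_left ((norm_nonneg _).trans (hCa 0)) (exp_pos _)
  refine ⟨C, a * c, mul_nonneg ha hc, fun y => (hCa _).trans ?_⟩
  rw [mul_assoc]
  gcongr
  exact hφ y

lemma comp_fst {h : X → G} (hh : ExpBounded h) : ExpBounded fun p : X × Y => h p.1 :=
  hh.comp (c := 1) (fun p => by simpa using norm_fst_le p) zero_le_one

lemma comp_snd {h : Y → G} (hh : ExpBounded h) : ExpBounded fun p : X × Y => h p.2 :=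
  hh.comp (c := 1) (fun p => by simpa using norm_snd_le p) zero_le_one

protected lemma id : ExpBounded (id : X → X) :=
  of_norm_le_mul_norm zero_le_one fun x => by simp

lemma of_norm_le_mul {G₁ G₂ : Type*} [NormedAddCommGroup G₁] [NormedAddCommGroup G₂]
    {h : X → G} {h₁ : X → G₁} {h₂ : X → G₂} (hh₁ : ExpBounded h₁) (hh₂ : ExpBounded h₂)
    (hle : ∀ x, ‖h x‖ ≤ ‖h₁ x‖ * ‖h₂ x‖) : ExpBounded h := by
  obtain ⟨C₁, a₁, ha₁, hC₁⟩ := hh₁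
  obtain ⟨C₂, a₂, ha₂, hC₂⟩ := hh₂
  refine ⟨C₁ * C₂, a₁ + a₂, add_nonneg ha₁ ha₂, fun x => (hle x).trans ?_⟩
  calc ‖h₁ x‖ * ‖h₂ x‖
      ≤ (C₁ * exp (a₁ * ‖x‖)) * (C₂ * exp (a₂ * ‖x‖)) :=
        mul_le_mul (hC₁ x) (hC₂ x) (norm_nonneg _) ((norm_nonneg _).trans (hC₁ x))
    _ = C₁ * C₂ * exp ((a₁ + a₂) * ‖x‖) := by rw [add_mul, exp_add]; ring

lemma prodMk_left {h : X × Y → G} (hh : ExpBounded h) (x : X) : ExpBounded fun y => h (x, y) := by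
  obtain ⟨C, a, ha, hC⟩ := hh
  have hC₀ : 0 ≤ C := nonneg_of_mul_nonneg_left ((norm_nonneg _).trans (hC 0)) (exp_pos _)
  refine ⟨C * exp (a * ‖x‖), a, ha, fun y => (hC (x, y)).trans ?_⟩
  rw [mul_assoc, ← exp_add, ← mul_add]
  gcongr
  exact max_le_add_of_nonneg (norm_nonneg x) (norm_nonneg y)

lemma clm_comp [NormedSpace ℝ G] {H : Type*} [NormedAddCommGroup H] [NormedSpace ℝ H] {h : X → G}
    (hh : ExpBounded h) (L : G →L[ℝ] H) : ExpBounded fun x => L (h x) :=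
  (of_norm_le_const (h := fun _ => L) ‖L‖ fun _ => le_rfl).of_norm_le_mul hh fun x =>
    L.le_opNorm (h x)

lemma clm_comp₂ {G₁ G₂ H : Type*} [NormedAddCommGroup G₁] [NormedSpace ℝ G₁]
    [NormedAddCommGroup G₂] [NormedSpace ℝ G₂] [NormedAddCommGroup H] [NormedSpace ℝ H]
    {h₁ : X → G₁} {h₂ : X → G₂} (L : G₁ →L[ℝ] G₂ →L[ℝ] H) (hh₁ : ExpBounded h₁)
    (hh₂ : ExpBounded h₂) : ExpBounded fun x => L (h₁ x) (h₂ x) :=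
  (hh₁.clm_comp L).of_norm_le_mul hh₂ fun x => (L (h₁ x)).le_opNorm (h₂ x)

lemma mul {h₁ h₂ : X → ℝ} (hh₁ : ExpBounded h₁) (hh₂ : ExpBounded h₂) :
    ExpBounded fun x => h₁ x * h₂ x :=
  .clm_comp₂ (ContinuousLinearMap.mul ℝ ℝ) hh₁ hh₂

lemma integrable [MeasurableSpace X] {μ : Measure X} {h : X → G} (hh : ExpBounded h)
    (hμ : HasExpMoments μ) (hmeas : AEStronglyMeasurable h μ) : Integrable h μ := by
  obtain ⟨C, a, -, hC⟩ := hh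
  exact ((hμ a).const_mul C).mono' hmeas (ae_of_all _ hC)

lemma expLipschitz_of_fderiv {E F : Type*} [NormedAddCommGroup E] [NormedSpace ℝ E]
    [NormedAddCommGroup F] [NormedSpace ℝ F] {g : E → F} (hg : Differentiable ℝ g)
    (hg' : ExpBounded (fderiv ℝ g)) : ExpLipschitz g := by
  obtain ⟨C, a, ha, hC⟩ := hg'
  have hC0 : 0 ≤ C := nonneg_of_mul_nonneg_left ((norm_nonneg _).trans (hC 0)) (exp_pos _)
  refine ⟨C, a, hC0, ha, fun x y => ?_⟩
  refine (convex_closedBall (0 : E) (‖x‖ + ‖y‖)).norm_image_sub_le_of_norm_fderiv_le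
    (fun z _ => hg z) (fun z hz => (hC z).trans ?_)
    (by simp) (by simp)
  have hz : ‖z‖ ≤ ‖x‖ + ‖y‖ := by simpa using hz
  gcongr

end ExpBounded

namespace ExpLipschitz

lemma expBounded {F : X → G} (hF : ExpLipschitz F) : ExpBounded F := by
  obtain ⟨C, a, hC, ha, hF⟩ := hF
  refine ⟨‖F 0‖ + C, a + 1, by positivity, fun x => ?_⟩
  have hx : ‖x‖ ≤ exp ‖x‖ := by linarith [add_one_le_exp ‖x‖]
  calc ‖F x‖ ≤ ‖F 0‖ + ‖F x - F 0‖ := norm_le_norm_add_norm_sub' _ _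
    _ ≤ ‖F 0‖ * 1 + C * exp (a * ‖x‖) * ‖x‖ := by simpa using hF x 0
    _ ≤ ‖F 0‖ * exp ((a + 1) * ‖x‖) + C * exp (a * ‖x‖) * exp ‖x‖ := by
        gcongr
        exact one_le_exp (by positivity)
    _ = (‖F 0‖ + C) * exp ((a + 1) * ‖x‖) := by
        rw [mul_assoc C, ← exp_add]; ring_nf

lemma continuous {F : X → G} (hF : ExpLipschitz F) : Continuous F := by
  obtain ⟨C, a, -, -, hF⟩ := hF
  refine continuous_iff_continuousAt.2 fun x => tendsto_iff_norm_sub_tendsto_zero.2 ?_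
  refine squeeze_zero (fun y => norm_nonneg _) (fun y => hF y x) ?_
  have hcont : Continuous fun y => C * exp (a * (‖y‖ + ‖x‖)) * ‖y - x‖ := by fun_prop
  simpa using hcont.tendsto x

lemma expBounded_fderiv {E F : Type*} [NormedAddCommGroup E] [NormedSpace ℝ E]
    [NormedAddCommGroup F] [NormedSpace ℝ F] {g : E → F} (hg : ExpLipschitz g) :
    ExpBounded (fderiv ℝ g) := by
  obtain ⟨C, a, hC, ha, hg⟩ := hg
  refine ⟨C * exp a, 2 * a, by positivity, fun x => ?_⟩
  refine norm_fderiv_le_of_lip' ℝ (by positivity) ?_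
  filter_upwards [Metric.ball_mem_nhds x one_pos] with y hy
  have hyx : ‖y‖ ≤ ‖x‖ + 1 :=
    (norm_le_norm_add_norm_sub' y x).trans (by gcongr; exact (mem_ball_iff_norm.1 hy).le)
  refine (hg y x).trans ?_
  rw [mul_assoc C (exp a), ← exp_add]
  gcongr
  nlinarith

lemma expBounded_fderiv_fst_snd {E F : Type*} [NormedAddCommGroup E] [NormedSpace ℝ E]
    [NormedAddCommGroup F] [NormedSpace ℝ F] {g : E → F} (hg : ExpLipschitz g) :
    ExpBounded fun p : E × E => fderiv ℝ g p.1 p.2 :=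
  hg.expBounded_fderiv.comp_fst.of_norm_le_mul ExpBounded.id.comp_snd
    fun p => (fderiv ℝ g p.1).le_opNorm p.2

lemma lipschitz_comp {H : Type*} [NormedAddCommGroup H] {K : NNReal}
    {f : G → H} (hf : LipschitzWith K f) {F : X → G} (hF : ExpLipschitz F) :
    ExpLipschitz (f ∘ F) := by
  obtain ⟨C, a, hC, ha, hF⟩ := hF
  refine ⟨K * C, a, by positivity, ha, fun x y => ?_⟩
  calc ‖f (F x) - f (F y)‖ ≤ K * ‖F x - F y‖ := hf.norm_sub_le _ _
    _ ≤ K * (C * exp (a * (‖x‖ + ‖y‖)) * ‖x - y‖) := by gcongr; exact hF x y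
    _ = K * C * exp (a * (‖x‖ + ‖y‖)) * ‖x - y‖ := by ring

end ExpLipschitz

namespace HasExpMoments

lemma prod [MeasurableSpace X] [MeasurableSpace Y] [OpensMeasurableSpace X]
    [OpensMeasurableSpace Y] [SecondCountableTopology X] {μ : Measure X} {ν : Measure Y}
    [SFinite μ] [SFinite ν] (hμ : HasExpMoments μ) (hν : HasExpMoments ν) :
    HasExpMoments (μ.prod ν) := by
  intro a
  refine ((hμ |a|).mul_prod (hν |a|)).mono' (by fun_prop) (ae_of_all _ fun p => ?_)
  rw [norm_of_nonneg (exp_pos _).le, ← exp_add, ← mul_add]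
  gcongr
  · exact le_abs_self a
  · exact max_le_add_of_nonneg (norm_nonneg _) (norm_nonneg _)

lemma restrict_of_isBounded [MeasurableSpace X] [OpensMeasurableSpace X] {μ : Measure X}
    {s : Set X} (hs : Bornology.IsBounded s) (hs' : MeasurableSet s) (hμs : μ s ≠ ⊤) :
    HasExpMoments (μ.restrict s) := by
  intro a
  obtain ⟨R, hR⟩ := hs.exists_norm_le
  refine Measure.integrableOn_of_bounded (M := exp (|a| * R)) hμs
    (by fun_prop) ?_
  filter_upwards [ae_restrict_mem hs'] with x hx
  rw [norm_of_nonneg (exp_pos _).le]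
  gcongr
  · exact le_abs_self a
  · exact hR x hx

end HasExpMoments

end ExponentialGrowth

section Reflection

variable {E : Type*} [NormedAddCommGroup E] [NormedSpace ℝ E]

lemma norm_smul_le_of_abs_le {a c : ℝ} (ha : |a| ≤ c) {v : E} {r : ℝ} (hv : ‖v‖ ≤ r) :
    ‖a • v‖ ≤ c * r := by
  rw [norm_smul, norm_eq_abs]
  exact mul_le_mul ha hv (norm_nonneg _) ((abs_nonneg a).trans ha)

/-- The linear reflection of `E × E` with matrix `(cos θ, sin θ; sin θ, -cos θ)`. Unlike the
rotation by `θ` it is its own inverse, so a change of variables along it keeps the same formulas. -/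
noncomputable def planeReflection (θ : ℝ) (p : E × E) : E × E :=
  (cos θ • p.1 + sin θ • p.2, sin θ • p.1 - cos θ • p.2)

namespace planeReflection

lemma continuous : Continuous fun z : ℝ × E × E => planeReflection z.1 z.2 := by
  unfold planeReflection
  fun_prop

lemma continuous_right (θ : ℝ) : Continuous (planeReflection θ : E × E → E × E) :=
  continuous.comp (Continuous.prodMk_right θ)

lemma involutive (θ : ℝ) : Function.Involutive (planeReflection θ : E × E → E × E) := by
  intro p
  have key (v : E) : (cos θ * cos θ + sin θ * sin θ) • v = v := by
    rw [← sq, ← sq, cos_sq_add_sin_sq, one_smul]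
  ext
  · refine Eq.trans ?_ (key p.1)
    simp only [planeReflection]
    module
  · refine Eq.trans ?_ (key p.2)
    simp only [planeReflection]
    module

lemma norm_fst_le (θ : ℝ) (p : E × E) : ‖(planeReflection θ p).1‖ ≤ 2 * ‖p‖ :=
  calc ‖cos θ • p.1 + sin θ • p.2‖ ≤ 1 * ‖p‖ + 1 * ‖p‖ :=
        norm_add_le_of_le (norm_smul_le_of_abs_le (abs_cos_le_one θ) (_root_.norm_fst_le p))
          (norm_smul_le_of_abs_le (abs_sin_le_one θ) (_root_.norm_snd_le p))
    _ = 2 * ‖p‖ := by ring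

lemma norm_fst_sub_fst_le (p : E × E) (θ θ' : ℝ) :
    ‖(planeReflection θ p).1 - (planeReflection θ' p).1‖ ≤ 2 * ‖p‖ * |θ - θ'| :=
  calc ‖(planeReflection θ p).1 - (planeReflection θ' p).1‖
      = ‖(cos θ - cos θ') • p.1 + (sin θ - sin θ') • p.2‖ := by
        congr 1
        simp only [planeReflection]
        module
    _ ≤ |θ - θ'| * ‖p‖ + |θ - θ'| * ‖p‖ :=
        norm_add_le_of_le (norm_smul_le_of_abs_le (abs_cos_sub_cos_le θ θ') (_root_.norm_fst_le p))
          (norm_smul_le_of_abs_le (abs_sin_sub_sin_le θ θ') (_root_.norm_snd_le p))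
    _ = 2 * ‖p‖ * |θ - θ'| := by ring

lemma hasDerivAt_fst (p : E × E) (θ : ℝ) :
    HasDerivAt (fun θ => (planeReflection θ p).1) (-(planeReflection θ p).2) θ := by
  refine (((hasDerivAt_cos θ).smul_const p.1).add
    ((hasDerivAt_sin θ).smul_const p.2)).congr_deriv ?_
  simp only [planeReflection]
  module

lemma exists_norm_comp_fst_sub_le {F : E → ℝ} (hF : ExpLipschitz F) :
    ∃ B : E × E → ℝ, Continuous B ∧ ExpBounded B ∧ ∀ p s t,
      ‖F (planeReflection s p).1 - F (planeReflection t p).1‖ ≤ B p * |s - t| := by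
  obtain ⟨C, a, hC, ha, hF⟩ := hF
  refine ⟨fun p => C * exp (4 * a * ‖p‖) * (2 * ‖p‖), by fun_prop, .mul ?_ ?_, fun p s t => ?_⟩
  · exact ⟨C, 4 * a, by positivity, fun p => by rw [norm_of_nonneg (by positivity)]⟩
  · exact .of_norm_le_mul_norm zero_le_two fun p => by rw [norm_of_nonneg (by positivity)]
  · have hsum : a * (‖(planeReflection s p).1‖ + ‖(planeReflection t p).1‖) ≤ 4 * a * ‖p‖ := by
      nlinarith [norm_fst_le s p, norm_fst_le t p]
    calc ‖F (planeReflection s p).1 - F (planeReflection t p).1‖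
        ≤ C * exp (a * (‖(planeReflection s p).1‖ + ‖(planeReflection t p).1‖))
          * ‖(planeReflection s p).1 - (planeReflection t p).1‖ := hF _ _
      _ ≤ C * exp (4 * a * ‖p‖) * (2 * ‖p‖ * |s - t|) :=
        mul_le_mul (by gcongr) (norm_fst_sub_fst_le p s t) (norm_nonneg _)
          (by positivity)
      _ = C * exp (4 * a * ‖p‖) * (2 * ‖p‖) * |s - t| := by ring

variable [MeasurableSpace E] [BorelSpace E] [SecondCountableTopology E] [CompleteSpace E]
  {γ : Measure E} [IsGaussian γ]

lemma measurePreserving (hγ : γ[id] = 0) (θ : ℝ) :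
    MeasurePreserving (planeReflection θ) (γ.prod γ) (γ.prod γ) := by
  have hneg : MeasurePreserving (fun x => -x) γ γ := by
    refine ⟨measurable_neg, Measure.ext_of_charFunDual (funext fun L => ?_)⟩
    have hmap : γ.map (fun x => -x) = γ.map (-ContinuousLinearMap.id ℝ E) := rfl
    rw [hmap, charFunDual_map, IsGaussian.charFunDual_eq_of_integral_eq_zero hγ,
      IsGaussian.charFunDual_eq_of_integral_eq_zero hγ]
    simp [variance_neg]
  have hrot : MeasurePreserving (ContinuousLinearMap.rotation θ) (γ.prod γ) (γ.prod γ) :=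
    ⟨by fun_prop, IsGaussian.map_rotation_eq_self hγ θ⟩
  convert ((MeasurePreserving.id γ).prod hneg).comp hrot using 1
  ext p
  · simp [planeReflection, ContinuousLinearMap.rotation_apply]
  · simp [planeReflection, ContinuousLinearMap.rotation_apply, sub_eq_neg_add]

lemma integral_comp (hγ : γ[id] = 0) (θ : ℝ) (k : E × E → ℝ) :
    ∫ p, k (planeReflection θ p) ∂γ.prod γ = ∫ p, k p ∂γ.prod γ :=
  (measurePreserving hγ θ).integral_comp (MeasurableEquiv.ofInvolutive _ (involutive θ)
    (continuous_right θ).measurable).measurableEmbedding k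

end planeReflection

end Reflection

section Covariance

variable {E : Type*} [NormedAddCommGroup E] [NormedSpace ℝ E] [MeasurableSpace E] [BorelSpace E]

/-- The gradient `-DL⁻¹g(x)`, where `L` is the Ornstein–Uhlenbeck generator of the Gaussian measure
`γ`, paired with `ℓ` through the covariance of `γ`. This is Mehler's formula
`-DL⁻¹g = ∫₀^∞ e⁻ᵗ Pₜ(Dg) dt` in the parametrisation `e⁻ᵗ = cos θ`. -/
noncomputable def mehlerGradient (γ : Measure E) (g : E → ℝ) (x : E) (ℓ : StrongDual ℝ E) : ℝ :=
  ∫ θ in Ioc 0 (π / 2), sin θ *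
    ∫ y, covarianceBilinDual γ ℓ (fderiv ℝ g (cos θ • x + sin θ • y)) ∂γ

lemma mehlerGradient_smul (γ : Measure E) (g : E → ℝ) (x : E) (c : ℝ) (ℓ : StrongDual ℝ E) :
    mehlerGradient γ g x (c • ℓ) = c * mehlerGradient γ g x ℓ := by
  simp only [mehlerGradient, map_smul, smul_apply, smul_eq_mul, integral_const_mul,
    mul_left_comm _ c]

variable [SecondCountableTopology E]

lemma aestronglyMeasurable_fderiv_fst_snd {μ : Measure E} [SFinite μ] {F : E → ℝ}
    (hFm : AEStronglyMeasurable (fderiv ℝ F) μ) :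
    AEStronglyMeasurable (fun p : E × E => fderiv ℝ F p.1 p.2) (μ.prod μ) :=
  (ContinuousLinearMap.id ℝ (E →L[ℝ] ℝ)).aestronglyMeasurable_comp₂ hFm.comp_fst
    aestronglyMeasurable_id.comp_snd

variable [CompleteSpace E] {γ : Measure E} [IsGaussian γ]

lemma hasExpMoments_of_isGaussian (γ : Measure E) [IsGaussian γ] : HasExpMoments γ := by
  intro a
  obtain ⟨C, hC, hint⟩ := IsGaussian.exists_integrable_exp_sq γ
  refine (hint.const_mul (exp (a ^ 2 / (4 * C)))).mono' (by fun_prop) (ae_of_all _ fun x => ?_)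
  have hsq : a * ‖x‖ ≤ a ^ 2 / (4 * C) + C * ‖x‖ ^ 2 := by
    have : 0 ≤ (a - 2 * C * ‖x‖) ^ 2 / (4 * C) := by positivity
    have heq : (a - 2 * C * ‖x‖) ^ 2 / (4 * C) = a ^ 2 / (4 * C) + C * ‖x‖ ^ 2 - a * ‖x‖ := by
      field_simp
      ring
    linarith
  rw [norm_of_nonneg (exp_pos _).le, ← exp_add]
  gcongr

lemma hasDerivAt_integral_mul_comp_planeReflection (hγ : γ[id] = 0) {h : E × E → ℝ}
    (hh : ExpBounded h) (hhm : AEStronglyMeasurable h (γ.prod γ)) {F : E → ℝ}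
    (hF : ExpLipschitz F) (hFd : ∀ᵐ x ∂γ, DifferentiableAt ℝ F x)
    (hFm : AEStronglyMeasurable (fderiv ℝ F) γ) (θ : ℝ) :
    HasDerivAt (fun θ => ∫ p, h p * F (planeReflection θ p).1 ∂γ.prod γ)
      (-∫ p, h (planeReflection θ p) * fderiv ℝ F p.1 p.2 ∂γ.prod γ) θ := by
  have hmoments := (hasExpMoments_of_isGaussian γ).prod (hasExpMoments_of_isGaussian γ)
  have hmp := planeReflection.measurePreserving hγ θ
  have hmeas (t : ℝ) :
      AEStronglyMeasurable (fun p => h p * F (planeReflection t p).1) (γ.prod γ) :=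
    hhm.mul (hF.continuous.comp (planeReflection.continuous_right t).fst).aestronglyMeasurable
  have hint : Integrable (fun p => h p * F (planeReflection θ p).1) (γ.prod γ) :=
    (hh.mul (hF.expBounded.comp (planeReflection.norm_fst_le θ) zero_le_two)).integrable
      hmoments (hmeas θ)
  have hmeas' : AEStronglyMeasurable (fun p => h p *
      -fderiv ℝ F (planeReflection θ p).1 (planeReflection θ p).2) (γ.prod γ) :=
    hhm.mul ((aestronglyMeasurable_fderiv_fst_snd hFm).comp_measurePreserving hmp).neg
  obtain ⟨B, hBc, hB, hFB⟩ := planeReflection.exists_norm_comp_fst_sub_le hF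
  have hbound : Integrable (fun p => h p * B p) (γ.prod γ) :=
    (hh.mul hB).integrable hmoments (hhm.mul hBc.aestronglyMeasurable)
  have hlip (p : E × E) : LipschitzOnWith (Real.nnabs (h p * B p))
      (fun t => h p * F (planeReflection t p).1) univ := by
    refine LipschitzOnWith.of_dist_le_mul fun s _ t _ => ?_
    rw [coe_nnabs, abs_mul, dist_eq_norm, ← mul_sub, norm_mul, mul_assoc, norm_eq_abs (h p)]
    gcongr
    exact (hFB p s t).trans (mul_le_mul_of_nonneg_right (le_abs_self _) (abs_nonneg _))
  have hdiff : ∀ᵐ p ∂γ.prod γ, HasDerivAt (fun t => h p * F (planeReflection t p).1)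
      (h p * -fderiv ℝ F (planeReflection θ p).1 (planeReflection θ p).2) θ := by
    filter_upwards [hmp.quasiMeasurePreserving.ae (Measure.quasiMeasurePreserving_fst.ae hFd)]
      with p hp
    simpa using (hp.hasFDerivAt.comp_hasDerivAt θ
      (planeReflection.hasDerivAt_fst p θ)).const_mul (h p)
  refine (hasDerivAt_integral_of_dominated_loc_of_lip Filter.univ_mem
    (Filter.Eventually.of_forall hmeas) hint hmeas' (ae_of_all _ hlip) hbound
    hdiff).2.congr_deriv ?_
  rw [← planeReflection.integral_comp hγ θ, ← integral_neg]
  simp [planeReflection.involutive θ _]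

lemma integral_dual_eq_zero (hγ : γ[id] = 0) (ℓ : StrongDual ℝ E) : ∫ x, ℓ x ∂γ = 0 := by
  rw [IsGaussian.integral_dual, show ∫ x, x ∂γ = 0 from hγ, map_zero]

lemma covarianceBilinDual_eq_integral_mul (hγ : γ[id] = 0) (ℓ m : StrongDual ℝ E) :
    covarianceBilinDual γ ℓ m = ∫ x, ℓ x * m x ∂γ := by
  simp [covarianceBilinDual_apply IsGaussian.memLp_two_id, integral_dual_eq_zero hγ]

lemma integral_dual_snd_mul_comp_planeReflection (hγ : γ[id] = 0) {F : E → ℝ}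
    (hF : ExpBounded F) (hFm : AEStronglyMeasurable F γ) (ℓ : StrongDual ℝ E) (t : ℝ) :
    ∫ p, ℓ p.2 * F (planeReflection t p).1 ∂γ.prod γ = sin t * ∫ x, ℓ x * F x ∂γ := by
  have hmom := hasExpMoments_of_isGaussian γ
  have hℓ : Integrable ℓ γ :=
    (ExpBounded.id.clm_comp ℓ).integrable hmom ℓ.continuous.aestronglyMeasurable
  have hFint : Integrable F γ := hF.integrable hmom hFm
  have hℓF : Integrable (fun x => ℓ x * F x) γ :=
    ((ExpBounded.id.clm_comp ℓ).mul hF).integrable hmom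
      (ℓ.continuous.aestronglyMeasurable.mul hFm)
  calc ∫ p, ℓ p.2 * F (planeReflection t p).1 ∂γ.prod γ
      = ∫ p, ℓ (planeReflection t p).2 * F p.1 ∂γ.prod γ := by
        rw [← planeReflection.integral_comp hγ t]
        simp only [planeReflection.involutive t _]
    _ = ∫ p, (sin t * (ℓ p.1 * F p.1) - cos t * (F p.1 * ℓ p.2)) ∂γ.prod γ := by
        congr 1 with p
        simp only [planeReflection, map_sub, map_smul, smul_eq_mul]
        ring
    _ = sin t * ∫ x, ℓ x * F x ∂γ - cos t * ((∫ x, F x ∂γ) * ∫ y, ℓ y ∂γ) := by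
        rw [integral_sub ((hℓF.comp_fst γ).const_mul _) ((hFint.mul_prod hℓ).const_mul _),
          integral_const_mul, integral_const_mul, integral_prod_mul,
          integral_fun_fst (fun x => ℓ x * F x), probReal_univ, one_smul]
    _ = sin t * ∫ x, ℓ x * F x ∂γ := by rw [integral_dual_eq_zero hγ]; ring

theorem integral_dual_mul_eq_integral_covarianceBilinDual (hγ : γ[id] = 0) {F : E → ℝ}
    (hF : ExpLipschitz F) (hFd : ∀ᵐ x ∂γ, DifferentiableAt ℝ F x)
    (hFm : AEStronglyMeasurable (fderiv ℝ F) γ) (ℓ : StrongDual ℝ E) :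
    ∫ x, ℓ x * F x ∂γ = ∫ x, covarianceBilinDual γ ℓ (fderiv ℝ F x) ∂γ := by
  have hmom := hasExpMoments_of_isGaussian γ
  have hℓ : ExpBounded fun p : E × E => ℓ p.2 := (ExpBounded.id.clm_comp ℓ).comp_snd
  have hℓm : AEStronglyMeasurable (fun p : E × E => ℓ p.2) (γ.prod γ) :=
    (ℓ.continuous.comp continuous_snd).aestronglyMeasurable
  have hderiv := hasDerivAt_integral_mul_comp_planeReflection hγ hℓ hℓm hF hFd hFm 0
  simp only [integral_dual_snd_mul_comp_planeReflection hγ hF.expBounded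
    hF.continuous.aestronglyMeasurable ℓ] at hderiv
  have hunique := hderiv.unique ((hasDerivAt_sin 0).mul_const _)
  have hint : Integrable (fun p : E × E => ℓ p.2 * fderiv ℝ F p.1 p.2) (γ.prod γ) :=
    (hℓ.mul hF.expBounded_fderiv_fst_snd).integrable (hmom.prod hmom)
      (hℓm.mul (aestronglyMeasurable_fderiv_fst_snd hFm))
  calc ∫ x, ℓ x * F x ∂γ = ∫ p, ℓ p.2 * fderiv ℝ F p.1 p.2 ∂γ.prod γ := by
        simpa [planeReflection, integral_neg] using hunique.symm
    _ = ∫ x, covarianceBilinDual γ ℓ (fderiv ℝ F x) ∂γ := by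
        simp only [integral_prod _ hint, covarianceBilinDual_eq_integral_mul hγ]

variable {g : E → ℝ} (hg : ContDiff ℝ 1 g) (hg' : ExpBounded (fderiv ℝ g)) {F : E → ℝ}
  (hF : ExpLipschitz F) (hFd : ∀ᵐ x ∂γ, DifferentiableAt ℝ F x)
  (hFm : AEStronglyMeasurable (fderiv ℝ F) γ)

include hg hg' in
lemma integral_dual_mul_comp_smul_add_smul (hγ : γ[id] = 0) (ℓ : StrongDual ℝ E) (θ : ℝ) (x : E) :
    ∫ y, ℓ y * g (cos θ • x + sin θ • y) ∂γ
      = sin θ * ∫ y, covarianceBilinDual γ ℓ (fderiv ℝ g (cos θ • x + sin θ • y)) ∂γ := by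
  have hgd : Differentiable ℝ g := hg.differentiable one_ne_zero
  have hderiv (y : E) : HasFDerivAt (fun y => g (cos θ • x + sin θ • y))
      (sin θ • fderiv ℝ g (cos θ • x + sin θ • y)) y := by
    refine ((hgd _).hasFDerivAt.comp y
      (((hasFDerivAt_id y).const_smul (sin θ)).const_add (cos θ • x))).congr_fderiv ?_
    ext v
    simp
  have hfderiv : fderiv ℝ (fun y => g (cos θ • x + sin θ • y))
      = fun y => sin θ • fderiv ℝ g (cos θ • x + sin θ • y) := funext fun y => (hderiv y).fderiv
  have hexp : ExpBounded (fderiv ℝ fun y => g (cos θ • x + sin θ • y)) := by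
    rw [hfderiv]
    refine ((hg'.comp (planeReflection.norm_fst_le θ) zero_le_two).prodMk_left x).of_norm_le_mul
      (.of_norm_le_const (h := fun _ => sin θ) 1 fun _ => abs_sin_le_one θ) fun y => ?_
    rw [norm_smul, mul_comm]
    rfl
  have hcont : Continuous (fderiv ℝ fun y => g (cos θ • x + sin θ • y)) := by
    rw [hfderiv]
    have := hg.continuous_fderiv one_ne_zero
    fun_prop
  rw [integral_dual_mul_eq_integral_covarianceBilinDual hγ
    (hexp.expLipschitz_of_fderiv fun y => (hderiv y).differentiableAt)
    (ae_of_all _ fun y => (hderiv y).differentiableAt) hcont.aestronglyMeasurable ℓ, hfderiv]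
  simp [integral_const_mul]

include hg hg' hF hFd hFm in
lemma hasDerivAt_integral_mul_comp_smul_add_smul (hγ : γ[id] = 0) (θ : ℝ) :
    HasDerivAt (fun θ => ∫ p, g p.1 * F (cos θ • p.1 + sin θ • p.2) ∂γ.prod γ)
      (-∫ x, sin θ * ∫ y, covarianceBilinDual γ (fderiv ℝ F x)
        (fderiv ℝ g (cos θ • x + sin θ • y)) ∂γ ∂γ) θ := by
  have hgb : ExpBounded g :=
    (hg'.expLipschitz_of_fderiv (hg.differentiable one_ne_zero)).expBounded
  refine (hasDerivAt_integral_mul_comp_planeReflection hγ hgb.comp_fst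
    (hg.continuous.comp continuous_fst).aestronglyMeasurable hF hFd hFm θ).congr_deriv ?_
  have hint : Integrable (fun p : E × E => g (planeReflection θ p).1 * fderiv ℝ F p.1 p.2)
      (γ.prod γ) :=
    ((hgb.comp (planeReflection.norm_fst_le θ) zero_le_two).mul
      hF.expBounded_fderiv_fst_snd).integrable
      ((hasExpMoments_of_isGaussian γ).prod (hasExpMoments_of_isGaussian γ))
      ((hg.continuous.comp (planeReflection.continuous_right θ).fst).aestronglyMeasurable.mul
        (aestronglyMeasurable_fderiv_fst_snd hFm))
  rw [integral_prod _ hint]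
  simp only [← integral_dual_mul_comp_smul_add_smul hg hg' hγ, mul_comm (g _)]
  rfl

include hg hg' hF hFm in
lemma integrable_covarianceBilinDual_fderiv_fderiv {μ : Measure ℝ} [SFinite μ]
    (hμ : HasExpMoments μ) :
    Integrable (fun p : (ℝ × E) × E => sin p.1.1 * covarianceBilinDual γ (fderiv ℝ F p.1.2)
      (fderiv ℝ g (cos p.1.1 • p.1.2 + sin p.1.1 • p.2))) ((μ.prod γ).prod γ) := by
  have hmom := hasExpMoments_of_isGaussian γ
  have hDg_cont : Continuous (fderiv ℝ g) := hg.continuous_fderiv one_ne_zero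
  have hDg : ExpBounded fun p : (ℝ × E) × E =>
      fderiv ℝ g (cos p.1.1 • p.1.2 + sin p.1.1 • p.2) := by
    refine hg'.comp (fun p => (planeReflection.norm_fst_le p.1.1 (p.1.2, p.2)).trans ?_)
      zero_le_two
    gcongr
    exact max_le_max_right _ (norm_snd_le p.1)
  have hcov : ExpBounded fun p : (ℝ × E) × E => covarianceBilinDual γ (fderiv ℝ F p.1.2)
      (fderiv ℝ g (cos p.1.1 • p.1.2 + sin p.1.1 • p.2)) :=
    .clm_comp₂ (G₁ := StrongDual ℝ E) (G₂ := StrongDual ℝ E) (covarianceBilinDual γ)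
      hF.expBounded_fderiv.comp_snd.comp_fst hDg
  have hcov_meas : AEStronglyMeasurable (fun p : (ℝ × E) × E => covarianceBilinDual γ
      (fderiv ℝ F p.1.2) (fderiv ℝ g (cos p.1.1 • p.1.2 + sin p.1.1 • p.2)))
      ((μ.prod γ).prod γ) :=
    (covarianceBilinDual γ).aestronglyMeasurable_comp₂ hFm.comp_snd.comp_fst
      (hDg_cont.comp (by fun_prop : Continuous fun p : (ℝ × E) × E =>
        cos p.1.1 • p.1.2 + sin p.1.1 • p.2)).aestronglyMeasurable
  have hsin : ExpBounded fun p : (ℝ × E) × E => sin p.1.1 :=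
    .of_norm_le_const 1 fun p => abs_sin_le_one p.1.1
  exact (hsin.mul hcov).integrable ((hμ.prod hmom).prod hmom) (.mul (by fun_prop) hcov_meas)

lemma hasExpMoments_restrict_Ioc : HasExpMoments (volume.restrict (Ioc (0 : ℝ) (π / 2))) :=
  .restrict_of_isBounded (Metric.isBounded_Ioc 0 _) measurableSet_Ioc measure_Ioc_lt_top.ne

include hg hg' hF hFm in
lemma integrable_mehlerGradient_fderiv :
    Integrable (fun x => mehlerGradient γ g x (fderiv ℝ F x)) γ := by
  simpa only [mehlerGradient, integral_const_mul] using
    (integrable_covarianceBilinDual_fderiv_fderiv hg hg' hF hFm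
      hasExpMoments_restrict_Ioc).integral_prod_left.integral_prod_right

include hg hg' hF hFd hFm in
theorem integral_mul_sub_integral_mul_integral_eq_integral_mehlerGradient (hγ : γ[id] = 0) :
    ∫ x, g x * F x ∂γ - (∫ x, g x ∂γ) * ∫ x, F x ∂γ
      = ∫ x, mehlerGradient γ g x (fderiv ℝ F x) ∂γ := by
  have hint := (integrable_covarianceBilinDual_fderiv_fderiv hg hg' hF hFm
      hasExpMoments_restrict_Ioc).integral_prod_left
  simp only [integral_const_mul] at hint
  have hpi : (0 : ℝ) ≤ π / 2 := by positivity
  have hFTC := intervalIntegral.integral_eq_sub_of_hasDerivAt (a := 0) (b := π / 2)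
    (fun θ _ => hasDerivAt_integral_mul_comp_smul_add_smul hg hg' hF hFd hFm hγ θ)
    ((intervalIntegrable_iff_integrableOn_Ioc_of_le hpi).2 hint.integral_prod_left.neg)
  have hzero : ∫ p, g p.1 * F (cos 0 • p.1 + sin 0 • p.2) ∂γ.prod γ = ∫ x, g x * F x ∂γ := by
    simpa using integral_fun_fst (μ := γ) (ν := γ) fun x => g x * F x
  have hpi_div_two : ∫ p, g p.1 * F (cos (π / 2) • p.1 + sin (π / 2) • p.2) ∂γ.prod γ
      = (∫ x, g x ∂γ) * ∫ x, F x ∂γ := by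
    simpa using integral_prod_mul (μ := γ) (ν := γ) g F
  rw [hzero, hpi_div_two, intervalIntegral.integral_of_le hpi, integral_neg,
    integral_integral_swap hint] at hFTC
  simp only [mehlerGradient]
  linarith

end Covariance

section NullSets

variable {E F : Type*} [NormedAddCommGroup E] [NormedSpace ℝ E]
  [NormedAddCommGroup F] [NormedSpace ℝ F]

lemma hasFDerivAt_zero_lipschitz_comp {H : Type*} [NormedAddCommGroup H] [NormedSpace ℝ H]
    {f : F → H} {K : NNReal} (hf : LipschitzWith K f) {g : E → F} {x : E}
    (hg : HasFDerivAt g (0 : E →L[ℝ] F) x) : HasFDerivAt (f ∘ g) (0 : E →L[ℝ] H) x := by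
  rw [hasFDerivAt_iff_isLittleO] at hg ⊢
  refine Asymptotics.IsBigO.trans_isLittleO (.of_bound K (.of_forall fun y => ?_)) hg
  simpa using hf.norm_sub_le (g y) (g x)

variable [FiniteDimensional ℝ E] [MeasurableSpace E] [BorelSpace E]
  (μ : Measure E) [μ.IsAddHaarMeasure]

lemma exists_mem_nhds_forall_measure_eq_zero_of_measure_image_eq_zero {Φ : E → E} {A : E →L[ℝ] E}
    (hA : A.det ≠ 0) {x₀ : E} (hΦ : HasStrictFDerivAt Φ A x₀) :
    ∃ t ∈ 𝓝 x₀, ∀ s ⊆ t, μ (Φ '' s) = 0 → μ s = 0 := by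
  obtain ⟨m, hm, hmA⟩ := ENNReal.lt_iff_exists_nnreal_btwn.1
    (ENNReal.ofReal_pos.2 (abs_pos.2 hA))
  obtain ⟨δ, hδ, hδ0⟩ :=
    ((mul_le_addHaar_image_of_lt_det μ A hmA).and self_mem_nhdsWithin).exists
  obtain ⟨t, ht, hΦt⟩ := hΦ.approximates_deriv_on_nhds (c := δ) (.inr hδ0)
  refine ⟨t, ht, fun s hs hμ => ?_⟩
  have hle : m * μ s ≤ 0 := hμ ▸ hδ s Φ (hΦt.mono_set hs)
  simpa [(ENNReal.coe_pos.1 hm).ne'] using hle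

section

variable [MeasurableSpace F] [BorelSpace F] (ν : Measure F)
  [ν.IsAddHaarMeasure]

lemma quasiMeasurePreserving_of_surjective {L : E →L[ℝ] F} (hL : Function.Surjective L) :
    Measure.QuasiMeasurePreserving L μ ν := by
  obtain ⟨c, -, hc⟩ := L.toLinearMap.exists_map_addHaar_eq_smul_addHaar μ ν hL
  exact ⟨L.measurable, (show μ.map L = c • ν from hc) ▸ Measure.smul_absolutelyContinuous⟩

variable [FiniteDimensional ℝ F]

lemma exists_mem_nhds_measure_inter_preimage_eq_zero {g : E → F} {L : E →L[ℝ] F}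
    (hL : Function.Surjective L) {x₀ : E} (hg : HasStrictFDerivAt g L x₀) {N : Set F}
    (hN : ν N = 0) : ∃ t ∈ 𝓝 x₀, μ (t ∩ g ⁻¹' N) = 0 := by
  obtain ⟨R, hR⟩ := L.exists_rightInverse_of_surjective (LinearMap.range_eq_top.2 hL)
  -- `Φ` straightens `g`: it is a local diffeomorphism at `x₀` with `L ∘ Φ = g`.
  let Φ : E → E := fun x => x + R (g x - L x)
  have hΦ : HasStrictFDerivAt Φ (.id ℝ E) x₀ :=
    ((hasStrictFDerivAt_id x₀).add
      (R.hasStrictFDerivAt.comp x₀ (hg.sub L.hasStrictFDerivAt))).congr_fderiv (by ext; simp)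
  have hLR (y : F) : L (R y) = y := DFunLike.congr_fun hR y
  have hLΦ (x : E) : L (Φ x) = g x := by simp [Φ, hLR]
  obtain ⟨t, ht, hnull⟩ := exists_mem_nhds_forall_measure_eq_zero_of_measure_image_eq_zero μ
    (by simp [ContinuousLinearMap.det]) hΦ
  refine ⟨t, ht, hnull _ inter_subset_left (measure_mono_null ?_
    ((quasiMeasurePreserving_of_surjective μ ν hL).preimage_null hN))⟩
  rintro _ ⟨x, ⟨-, hx⟩, rfl⟩
  simpa only [mem_preimage, hLΦ] using hx

theorem ae_not_surjective_fderiv_of_mem {g : E → F} (hg : ContDiff ℝ 1 g) {N : Set F}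
    (hN : ν N = 0) : ∀ᵐ x ∂μ, g x ∈ N → ¬ Function.Surjective (fderiv ℝ g x) := by
  simp only [ae_iff, Classical.not_imp, not_not]
  refine measure_null_of_locally_null _ fun x hx => ?_
  obtain ⟨t, ht, ht0⟩ := exists_mem_nhds_measure_inter_preimage_eq_zero μ ν hx.2
    (hg.contDiffAt.hasStrictFDerivAt one_ne_zero) hN
  refine ⟨_, inter_mem_nhdsWithin _ ht, measure_mono_null ?_ ht0⟩
  rintro y ⟨⟨hyN, -⟩, hyt⟩
  exact ⟨hyt, hyN⟩

end

theorem ae_hasFDerivAt_lipschitz_comp {f f' : ℝ → ℝ} {K : NNReal} (hf : LipschitzWith K f)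
    (hf' : ∀ᵐ y, HasDerivAt f (f' y) y) {g : E → ℝ} (hg : ContDiff ℝ 1 g) :
    ∀ᵐ x ∂μ, HasFDerivAt (f ∘ g) (f' (g x) • fderiv ℝ g x) x := by
  filter_upwards [ae_not_surjective_fderiv_of_mem μ volume hg hf'] with x hx
  have hgx : HasFDerivAt g (fderiv ℝ g x) x := (hg.differentiable one_ne_zero x).hasFDerivAt
  by_cases hfx : HasDerivAt f (f' (g x)) (g x)
  · exact hfx.comp_hasFDerivAt x hgx
  · have hzero : fderiv ℝ g x = 0 := by
      by_contra h
      exact hx hfx (LinearMap.surjective (ContinuousLinearMap.coe_injective.ne h))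
    rw [hzero] at hgx ⊢
    simpa using hasFDerivAt_zero_lipschitz_comp hf hgx

end NullSets

section ProductMeasures

lemma absolutelyContinuous_pi {n : ℕ} {α : Fin n → Type*} [∀ i, MeasurableSpace (α i)]
    {μ ν : ∀ i, Measure (α i)} [∀ i, SigmaFinite (μ i)] [∀ i, SigmaFinite (ν i)]
    (h : ∀ i, μ i ≪ ν i) : Measure.pi μ ≪ Measure.pi ν := by
  induction n with
  | zero => rw [Measure.pi_of_empty μ, Measure.pi_of_empty ν]
  | succ n ih =>
    rw [← ((measurePreserving_piFinSuccAbove μ 0).symm _).map_eq,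
      ← ((measurePreserving_piFinSuccAbove ν 0).symm _).map_eq]
    exact ((h 0).prod (ih fun i => h (Fin.succAbove 0 i))).map (MeasurableEquiv.measurable _)

variable {ι : Type*} [Fintype ι]

lemma isGaussian_pi {X : ι → Type*} [∀ i, NormedAddCommGroup (X i)] [∀ i, NormedSpace ℝ (X i)]
    [∀ i, MeasurableSpace (X i)] [∀ i, BorelSpace (X i)] [∀ i, SecondCountableTopology (X i)]
    [∀ i, CompleteSpace (X i)] (μ : ∀ i, Measure (X i)) [∀ i, IsGaussian (μ i)] :
    IsGaussian (Measure.pi μ) := by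
  have hindep : iIndepFun (fun i (x : ∀ i, X i) => x i) (Measure.pi μ) :=
    iIndepFun_pi (X := fun _ x => x) fun _ => aemeasurable_id
  have heval (i : ι) : HasGaussianLaw (fun x : ∀ i, X i => x i) (Measure.pi μ) :=
    ⟨by rw [(measurePreserving_eval μ i).map_eq]; infer_instance⟩
  simpa using (hindep.hasGaussianLaw heval).isGaussian_map

lemma integral_id_pi_gaussianReal : (Measure.pi fun _ : ι => gaussianReal 0 1)[id] = 0 := by
  ext i
  simp only [id_eq]
  rw [eval_integral fun i => integrable_eval IsGaussian.integrable_id]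
  simp [integral_eval]

lemma covariance_eval_pi [DecidableEq ι] {μ : ι → Measure ℝ} [∀ i, IsProbabilityMeasure (μ i)]
    (hμ : ∀ i, MemLp id 2 (μ i)) (i j : ι) :
    cov[fun x => x i, fun x => x j; Measure.pi μ] = if i = j then Var[id; μ i] else 0 := by
  have hmem (k : ι) : MemLp (fun x : ι → ℝ => x k) 2 (Measure.pi μ) :=
    (hμ k).comp_measurePreserving (measurePreserving_eval μ k)
  split_ifs with hij
  · subst hij
    rw [covariance_self (measurable_pi_apply i).aemeasurable]
    exact (measurePreserving_eval μ i).variance_fun_comp aemeasurable_id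
  · exact ((iIndepFun_pi (X := fun _ x => x) fun _ => aemeasurable_id).indepFun hij)
      |>.covariance_eq_zero (hmem i) (hmem j)

lemma covarianceBilinDual_pi_gaussianReal [DecidableEq ι] (ℓ m : StrongDual ℝ (ι → ℝ)) :
    covarianceBilinDual (Measure.pi fun _ : ι => gaussianReal 0 1) ℓ m
      = ∑ i, ℓ (Pi.single i 1) * m (Pi.single i 1) := by
  have := isGaussian_pi fun _ : ι => gaussianReal 0 1
  have hsum (L : StrongDual ℝ (ι → ℝ)) : ⇑L = fun x => ∑ i, L (Pi.single i 1) * x i := by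
    ext x
    conv_lhs => rw [pi_eq_sum_univ' x]
    simp [mul_comm]
  have hmem (L : StrongDual ℝ (ι → ℝ)) (i : ι) : MemLp (fun x => L (Pi.single i 1) * x i) 2
      (Measure.pi fun _ : ι => gaussianReal 0 1) :=
    (IsGaussian.memLp_two_id.comp_measurePreserving
      (measurePreserving_eval (fun _ : ι => gaussianReal 0 1) i)).const_mul _
  calc covarianceBilinDual (Measure.pi fun _ : ι => gaussianReal 0 1) ℓ m
      = cov[fun x => ∑ i, ℓ (Pi.single i 1) * x i, fun x => ∑ i, m (Pi.single i 1) * x i;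
          Measure.pi fun _ : ι => gaussianReal 0 1] := by
        rw [covarianceBilinDual_eq_covariance IsGaussian.memLp_two_id, ← hsum, ← hsum]
    _ = ∑ i, ℓ (Pi.single i 1) * m (Pi.single i 1) := by
        rw [covariance_fun_sum_fun_sum (hmem ℓ) (hmem m)]
        simp only [covariance_const_mul_left, covariance_const_mul_right,
          covariance_eval_pi fun _ : ι => IsGaussian.memLp_two_id, variance_id_gaussianReal,
          NNReal.coe_one, mul_ite, mul_one, mul_zero, Finset.sum_ite_eq, Finset.mem_univ,
          if_true]
        exact Finset.sum_congr rfl fun _ _ => mul_comm _ _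

end ProductMeasures

lemma integral_Ioc_sqrt_eq_integral_Ioc_cos_sin (k : ℝ → ℝ → ℝ) :
    ∫ t in Ioc 0 1, 1 / (2 * √t) * k √t √(1 - t)
      = ∫ θ in Ioc 0 (π / 2), sin θ * k (cos θ) (sin θ) := by
  have hpos {θ : ℝ} (hθ : θ ∈ Ioo 0 (π / 2)) : 0 < cos θ ∧ 0 < sin θ :=
    ⟨cos_pos_of_mem_Ioo ⟨by linarith [hθ.1, pi_pos], hθ.2⟩,
      sin_pos_of_pos_of_lt_pi hθ.1 (by linarith [hθ.2, pi_pos])⟩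
  have himage : (fun θ => cos θ ^ 2) '' Ioo 0 (π / 2) = Ioo 0 1 := by
    ext t
    refine ⟨?_, fun ht => ⟨arccos √t, ⟨?_, ?_⟩, ?_⟩⟩
    · rintro ⟨θ, hθ, rfl⟩
      exact ⟨pow_pos (hpos hθ).1 2, by nlinarith [cos_sq_add_sin_sq θ, (hpos hθ).2]⟩
    · exact arccos_pos.2 (by rw [sqrt_lt' one_pos]; simpa using ht.2)
    · exact arccos_lt_pi_div_two.2 (sqrt_pos.2 ht.1)
    · simp only
      rw [cos_arccos (by linarith [sqrt_nonneg t]) (sqrt_le_one.2 ht.2.le), sq_sqrt ht.1.le]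
  have hderiv (θ : ℝ) : HasDerivAt (fun θ => cos θ ^ 2) (2 * cos θ * -sin θ) θ := by
    simpa using (hasDerivAt_cos θ).fun_pow 2
  have hanti : AntitoneOn (fun θ => cos θ ^ 2) (Ioo 0 (π / 2)) := by
    intro θ hθ θ' hθ' hle
    have : cos θ' ≤ cos θ :=
      cos_le_cos_of_nonneg_of_le_pi hθ.1.le (by linarith [hθ'.2, pi_pos]) hle
    exact pow_le_pow_left₀ (hpos hθ').1.le this 2
  rw [integral_Ioc_eq_integral_Ioo, integral_Ioc_eq_integral_Ioo, ← himage,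
    integral_image_eq_integral_deriv_smul_of_antitoneOn measurableSet_Ioo
      (fun θ _ => (hderiv θ).hasDerivWithinAt) hanti]
  refine setIntegral_congr_fun measurableSet_Ioo fun θ hθ => ?_
  obtain ⟨hcos, hsin⟩ := hpos hθ
  have hsqrt : √(1 - cos θ ^ 2) = sin θ := by rw [← sin_sq, sqrt_sq hsin.le]
  simp only [smul_eq_mul, sqrt_sq hcos.le, hsqrt]
  field_simp

section StandardGaussianVector

variable {Ω : Type*} [MeasurableSpace Ω] {P : Measure Ω} {n : ℕ} {V : Ω → Fin n → ℝ}
  (hV : HasLaw V (Measure.pi fun _ => gaussianReal 0 1) P) {g : (Fin n → ℝ) → ℝ}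
  (hg : ContDiff ℝ 1 g)

include hV hg

lemma chatterjeeS_eq_mehlerGradient_fderiv (v : Fin n → ℝ) :
    chatterjeeS P V g v
      = mehlerGradient (Measure.pi fun _ => gaussianReal 0 1) g v (fderiv ℝ g v) := by
  have hlaw (c s : ℝ) : ∫ ω, ∑ i, fderiv ℝ g v (Pi.single i 1) *
        fderiv ℝ g (c • v + s • V ω) (Pi.single i 1) ∂P
      = ∫ y, covarianceBilinDual (Measure.pi fun _ => gaussianReal 0 1) (fderiv ℝ g v)
        (fderiv ℝ g (c • v + s • y)) ∂Measure.pi fun _ => gaussianReal 0 1 := by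
    have : Continuous (fderiv ℝ g) := hg.continuous_fderiv one_ne_zero
    have hcont : Continuous fun y => covarianceBilinDual (Measure.pi fun _ => gaussianReal 0 1)
      (fderiv ℝ g v) (fderiv ℝ g (c • v + s • y)) := by fun_prop
    rw [← hV.integral_comp hcont.aestronglyMeasurable]
    simp only [Function.comp_def, covarianceBilinDual_pi_gaussianReal]
  simp only [chatterjeeS, mehlerGradient, hlaw]
  exact integral_Ioc_sqrt_eq_integral_Ioc_cos_sin fun c s => ∫ y, covarianceBilinDual _
    (fderiv ℝ g v) (fderiv ℝ g (c • v + s • y)) ∂Measure.pi fun _ => gaussianReal 0 1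

theorem chatterjee_identity_general (hg' : ExpBounded (fderiv ℝ g)) {f f' : ℝ → ℝ} {K : NNReal}
    (hf : LipschitzWith K f) (hf' : ∀ᵐ y, HasDerivAt f (f' y) y) :
    ∫ ω, g (V ω) * f (g (V ω)) ∂P - (∫ ω, g (V ω) ∂P) * ∫ ω, f (g (V ω)) ∂P
      = ∫ ω, chatterjeeS P V g (V ω) * f' (g (V ω)) ∂P := by
  set γ : Measure (Fin n → ℝ) := Measure.pi fun _ => gaussianReal 0 1
  have : IsGaussian γ := isGaussian_pi _
  have hF : ExpLipschitz (f ∘ g) :=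
    .lipschitz_comp hf (hg'.expLipschitz_of_fderiv (hg.differentiable one_ne_zero))
  have hFd : ∀ᵐ v ∂γ, HasFDerivAt (f ∘ g) (f' (g v) • fderiv ℝ g v) v :=
    (absolutelyContinuous_pi fun _ => gaussianReal_absolutelyContinuous 0 one_ne_zero).ae_le
      (ae_hasFDerivAt_lipschitz_comp volume hf hf' hg)
  have hFm : AEStronglyMeasurable (fderiv ℝ (f ∘ g)) γ :=
    (measurable_fderiv ℝ (f ∘ g)).aestronglyMeasurable
  have hS : (fun v => mehlerGradient γ g v (fderiv ℝ (f ∘ g) v))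
      =ᵐ[γ] fun v => chatterjeeS P V g v * f' (g v) := by
    filter_upwards [hFd] with v hv
    rw [hv.fderiv, mehlerGradient_smul, chatterjeeS_eq_mehlerGradient_fderiv hV hg, mul_comm]
  have hSm := (integrable_mehlerGradient_fderiv hg hg' hF hFm).aestronglyMeasurable.congr hS
  have hgF : AEStronglyMeasurable (fun v => g v * (f ∘ g) v) γ :=
    (hg.continuous.mul hF.continuous).aestronglyMeasurable
  have hcov := integral_mul_sub_integral_mul_integral_eq_integral_mehlerGradient hg hg' hF
    (hFd.mono fun v hv => hv.differentiableAt) hFm integral_id_pi_gaussianReal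
  rwa [integral_congr_ae hS, ← hV.integral_comp hSm, ← hV.integral_comp hgF,
    ← hV.integral_comp hg.continuous.aestronglyMeasurable,
    ← hV.integral_comp hF.continuous.aestronglyMeasurable] at hcov

end StandardGaussianVector

/-- Chatterjee's identity: for `Y = g(V)` with `V` a standard Gaussian vector, `g` smooth with
subexponential growth of `g` and all its derivatives, `E[g(V)] = 0`, `E[g(V)²] = 1`, and the
law of `Y` absolutely continuous, one has `E[Y f(Y)] = E[S(V) f'(Y)]` for every Lipschitz `f`
with a.e. derivative `f'`. -/
theorem chatterjee_identity
    {Ω : Type*} [MeasurableSpace Ω] (P : Measure Ω) [IsProbabilityMeasure P]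
    {n : ℕ} (V : Ω → (Fin n → ℝ)) (hV : Measurable V)
    (hlaw : P.map V = Measure.pi (fun _ : Fin n => gaussianReal 0 1))
    (g : (Fin n → ℝ) → ℝ) (hg : ContDiff ℝ (⊤ : ℕ∞) g)
    (hgrowth : ∀ k : ℕ, ∀ ε > (0 : ℝ), ∃ c : ℝ, ∀ x,
      ‖iteratedFDeriv ℝ k g x‖ ≤ c * Real.exp (ε * ‖x‖))
    (hmean : ∫ ω, g (V ω) ∂P = 0)
    (hvar : ∫ ω, (g (V ω)) ^ 2 ∂P = 1)
    (habs : P.map (fun ω => g (V ω)) ≪ (volume : Measure ℝ))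
    (f f' : ℝ → ℝ) (K : NNReal) (hf : LipschitzWith K f)
    (hf' : ∀ᵐ x ∂(volume : Measure ℝ), HasDerivAt f (f' x) x) :
    ∫ ω, g (V ω) * f (g (V ω)) ∂P
      = ∫ ω, chatterjeeS P V g (V ω) * f' (g (V ω)) ∂P := by
  obtain ⟨c, hc⟩ := hgrowth 1 1 one_pos
  simpa [hmean] using chatterjee_identity_general ⟨hV.aemeasurable, hlaw⟩
    (hg.of_le (by exact_mod_cast le_top))
    ⟨c, 1, zero_le_one, fun x => by simpa only [norm_iteratedFDeriv_one] using hc x⟩ hf hf'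
end
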